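/- Let 1 ≤ ℓ < k, suppose 1/n ≪ 1/C ≪ β ≪ η ≪ 1/k and 0 < ε ≤ ℓ/(3t₁), where t₁ = ⌈ℓ/(k−ℓ)⌉ and t₃ = 3t₁(k−ℓ) − ℓ. Let H′ and G be two n-vertex k-graphs on the same vertex set V such that for every ℓ-set S ⊆ V either deg_{H′}(S) = 0 or deg_{H′}(S) ≥ η·n^{k−ℓ}, and G = 𝔾^{(k)}(n,p) with p ≥ n^{−(k−ℓ)−ε} if ℓ ≥ 2 and p ≥ C·n^{−(k−1)} if ℓ = 1. Then for any set W ⊆ V with |W| ≤ ηn/3, a.a.s. H′ ∪ G contains a collection 𝒞 of pairwise disjoint t₃-sets such that V(𝒞) ∩ W = ∅, |𝒞| ≤ βn, and for every two disjoint ordered ℓ-sets S, S′ in V with deg_{H′}(S), deg_{H′}(S′) ≥ η·n^{k−ℓ}, at least 3β³n members of 𝒞 connect S and S′ in H′ ∪ G. -/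

import Mathlib

open Finset
open scoped Classical

/-- All `k`-subsets of `Fin n` (the possible edges of a `k`-graph on `n` vertices). -/
def kSets (n k : ℕ) : Finset (Finset (Fin n)) := Finset.univ.powersetCard k

/-- The probability that the binomial random `k`-graph `G^{(k)}(n,p)` (each `k`-set is an
edge independently with probability `p`) has an edge set satisfying the property `A`. -/
noncomputable def gProb (n k : ℕ) (p : ℝ) (A : Finset (Finset (Fin n)) → Prop) : ℝ :=
  ∑ E ∈ (kSets n k).powerset.filter (fun E => A E),
    p ^ E.card * (1 - p) ^ ((kSets n k).card - E.card)

/-- Expectation of a random variable `f` of the random `k`-graph `G^{(k)}(n,p)`. -/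
noncomputable def gExpect (n k : ℕ) (p : ℝ) (f : Finset (Finset (Fin n)) → ℝ) : ℝ :=
  ∑ E ∈ (kSets n k).powerset,
    p ^ E.card * (1 - p) ^ ((kSets n k).card - E.card) * f E

/-- The degree of a vertex set `S` in the `k`-graph with edge set `E`: the number of edges
containing `S` (equivalently, the number of `(k-|S|)`-sets `T` with `S ∪ T ∈ E`). -/
def degOf {n : ℕ} (E : Finset (Finset (Fin n))) (S : Finset (Fin n)) : ℕ :=
  (E.filter (fun e => S ⊆ e)).card

/-- The minimum vertex degree (minimum 1-degree) of a `k`-graph. -/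
noncomputable def minVertexDeg {n : ℕ} (E : Finset (Finset (Fin n))) : ℕ :=
  sInf {d : ℕ | ∃ v : Fin n, degOf E {v} = d}

/-- The index set of the `i`-th edge of the path `P_{a,x}`:
`{x + i*d, x + i*d + 1, …, x + i*d + k - 1}` (here `d = k - ℓ`). -/
def edgeIdx (k d x i : ℕ) : Finset ℕ := (Finset.range k).image (fun j => x + i * d + j)

/-- The ordered `b`-tuple `w` spans a labeled copy of `P_{a,x}` (the `k`-uniform `ℓ`-path
with `a` edges, preceded and followed by `x` isolated vertices) in the edge set `E`. -/
def SpansPax {n : ℕ} (k ℓ a x : ℕ) (E : Finset (Finset (Fin n))) {b : ℕ}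
    (w : Fin b → Fin n) : Prop :=
  Function.Injective w ∧
  ∀ i < a,
    ((Finset.univ.filter (fun m : Fin b => (m : ℕ) ∈ edgeIdx k (k - ℓ) x i)).image w) ∈ E

/-- The ordered tuple `w` spans a labeled copy of the `ℓ`-path `P_a` of length `a` in `E`. -/
def SpansPath {n : ℕ} (k ℓ a : ℕ) (E : Finset (Finset (Fin n))) {b : ℕ}
    (w : Fin b → Fin n) : Prop :=
  SpansPax k ℓ a 0 E w

/-- The first `ℓ`-end of the ordered tuple `w` (its first `ℓ` vertices, as a set). -/
def firstEnd {n b : ℕ} (ℓ : ℕ) (w : Fin b → Fin n) : Finset (Fin n) :=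
  (Finset.univ.filter (fun m : Fin b => (m : ℕ) < ℓ)).image w

/-- The last `ℓ`-end of the ordered tuple `w` (its last `ℓ` vertices, as a set). -/
def lastEnd {n b : ℕ} (ℓ : ℕ) (w : Fin b → Fin n) : Finset (Fin n) :=
  (Finset.univ.filter (fun m : Fin b => b - ℓ ≤ (m : ℕ))).image w

/-- The `k`-graph with edge set `E` on vertex set `Fin n` contains a Hamiltonian `ℓ`-cycle:
there is a cyclic ordering of all `n` vertices such that each of the `n/(k-ℓ)` edges
consists of `k` consecutive vertices, consecutive edges overlapping in `ℓ` vertices. -/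
def IsHamCycle (n k ℓ : ℕ) (E : Finset (Finset (Fin n))) : Prop :=
  ∃ f : ZMod n → Fin n, Function.Bijective f ∧
    ∀ i < n / (k - ℓ),
      ((Finset.range k).image (fun j => f (((i * (k - ℓ) + j : ℕ) : ZMod n)))) ∈ E

/-- The `ℓ`-shadow of a `k`-graph: all `ℓ`-sets contained in some edge. -/
def shadowL {n : ℕ} (ℓ : ℕ) (E : Finset (Finset (Fin n))) : Finset (Finset (Fin n)) :=
  (Finset.univ.powersetCard ℓ).filter (fun S => ∃ e ∈ E, S ⊆ e)

/-- The list `v` of vertices spans a copy of the `ℓ`-path `P_a` of length `a` in `E`. -/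
def ListSpans {n : ℕ} (k ℓ a : ℕ) (E : Finset (Finset (Fin n))) (v : List (Fin n)) : Prop :=
  v.Nodup ∧ v.length = a * (k - ℓ) + ℓ ∧
    ∀ i < a, ((v.drop (i * (k - ℓ))).take k).toFinset ∈ E

/-- `Φ_F(n,p) = min { n^{v_H} p^{e_H} : H ⊆ F, e_H > 0 }`, where the subgraph `H` is given
by a nonempty edge set `E' ⊆ F` together with a vertex set `W` containing all its edges. -/
noncomputable def Phi {V : Type*} (n : ℕ) (p : ℝ) (F : Finset (Finset V)) : ℝ :=
  sInf {r : ℝ | ∃ (W : Finset V) (E' : Finset (Finset V)),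
    E' ⊆ F ∧ E'.Nonempty ∧ (∀ e ∈ E', e ⊆ W) ∧ r = (n : ℝ) ^ W.card * p ^ E'.card}

/-- The ordered tuple `w` spans a labeled copy of the `k`-graph `F` (given by its edge set
`Fe` on vertex set `Fin s`) in the edge set `E`. -/
def SpansCopy {n s : ℕ} (Fe : Finset (Finset (Fin s))) (E : Finset (Finset (Fin n)))
    (w : Fin s → Fin n) : Prop :=
  ∀ e ∈ Fe, e.image w ∈ E

/-- Concatenation of three ordered tuples. -/
def concat3 {n p q r : ℕ} (A : Fin p → Fin n) (C : Fin q → Fin n) (B : Fin r → Fin n)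
    (m : Fin (p + q + r)) : Fin n :=
  if h : (m : ℕ) < p then A ⟨(m : ℕ), h⟩
  else if h2 : (m : ℕ) < p + q then C ⟨(m : ℕ) - p, by omega⟩
  else B ⟨(m : ℕ) - (p + q), by have := m.isLt; omega⟩

/-- `w`, spanning an `ℓ`-path of length `a`, is a `W`-absorber in `E`: it avoids `W`, and
its vertex set together with `W` spans an `ℓ`-path (of length `a+1` when `|W| = k - ℓ`)
with the same two `ℓ`-ends. -/
def IsAbsorber {n : ℕ} (k ℓ a : ℕ) (E : Finset (Finset (Fin n))) {b : ℕ}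
    (w : Fin b → Fin n) (W : Finset (Fin n)) : Prop :=
  (∀ m, w m ∉ W) ∧
  ∃ w' : Fin (b + W.card) → Fin n, SpansPath k ℓ (a + 1) E w' ∧
    Finset.image w' Finset.univ = Finset.image w Finset.univ ∪ W ∧
    firstEnd ℓ w' = firstEnd ℓ w ∧ lastEnd ℓ w' = lastEnd ℓ w



/-! ### Expectations over random subsets -/

/-- Expectation of `f` over a `p`-random subset of `K`. -/
noncomputable def EE {α : Type*} (p : ℝ) (K : Finset α) (f : Finset α → ℝ) : ℝ :=
  ∑ E ∈ K.powerset, p ^ E.card * (1 - p) ^ (K.card - E.card) * f E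

section EEsec
variable {α : Type*} {p : ℝ}

lemma EE_empty (f : Finset α → ℝ) : EE p ∅ f = f ∅ := by simp [EE]

lemma EE_insert [DecidableEq α] {a : α} {K : Finset α} (ha : a ∉ K) (f : Finset α → ℝ) :
    EE p (insert a K) f = (1 - p) * EE p K f + p * EE p K (fun E => f (insert a E)) := by
  unfold EE
  rw [Finset.sum_powerset_insert ha, Finset.mul_sum, Finset.mul_sum]
  congr 1
  · apply Finset.sum_congr rfl
    intro E hE
    have h1 := Finset.card_le_card (Finset.mem_powerset.1 hE)
    rw [Finset.card_insert_of_notMem ha, Nat.sub_add_comm h1, pow_succ]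
    ring
  · apply Finset.sum_congr rfl
    intro E hE
    have h0 : a ∉ E := fun h => ha (Finset.mem_powerset.1 hE h)
    rw [Finset.card_insert_of_notMem ha, Finset.card_insert_of_notMem h0, Nat.add_sub_add_right,
      pow_succ]
    ring

lemma EE_mono (hp0 : 0 ≤ p) (hp1 : p ≤ 1) {K : Finset α} {f g : Finset α → ℝ}
    (h : ∀ E ⊆ K, f E ≤ g E) : EE p K f ≤ EE p K g := by
  unfold EE
  apply Finset.sum_le_sum
  intro E hE
  have : 0 ≤ 1 - p := by linarith
  apply mul_le_mul_of_nonneg_left (h E (Finset.mem_powerset.1 hE))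
  positivity

lemma EE_congr {K : Finset α} {f g : Finset α → ℝ}
    (h : ∀ E ⊆ K, f E = g E) : EE p K f = EE p K g := by
  unfold EE
  apply Finset.sum_congr rfl
  intro E hE
  rw [h E (Finset.mem_powerset.1 hE)]

lemma EE_const (K : Finset α) (c : ℝ) : EE p K (fun _ => c) = c := by
  induction K using Finset.induction_on with
  | empty => simp [EE]
  | insert a K ha ih => rw [EE_insert ha, ih]; ring

lemma EE_union [DecidableEq α] {K L : Finset α} (h : Disjoint K L) (f : Finset α → ℝ) :
    EE p (K ∪ L) f = EE p L (fun E2 => EE p K (fun E1 => f (E1 ∪ E2))) := by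
  induction L using Finset.induction_on generalizing f with
  | empty => simp [EE_empty]
  | insert a L ha ih =>
    have h1 : a ∉ K := fun h' => (Finset.disjoint_left.1 h h') (Finset.mem_insert_self _ _)
    have h2 : Disjoint K L := h.mono_right (Finset.subset_insert _ _)
    have h3 : a ∉ K ∪ L := by simp [h1, ha]
    rw [Finset.union_insert, EE_insert h3, EE_insert ha, ih h2, ih h2]
    simp only [Finset.union_insert]

lemma EE_add (K : Finset α) (f g : Finset α → ℝ) :
    EE p K (fun E => f E + g E) = EE p K f + EE p K g := by
  unfold EE
  rw [← Finset.sum_add_distrib]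
  apply Finset.sum_congr rfl; intros; ring

lemma EE_smul (K : Finset α) (c : ℝ) (f : Finset α → ℝ) :
    EE p K (fun E => c * f E) = c * EE p K f := by
  unfold EE
  rw [Finset.mul_sum]
  apply Finset.sum_congr rfl; intros; ring

lemma EE_sub (K : Finset α) (f g : Finset α → ℝ) :
    EE p K (fun E => f E - g E) = EE p K f - EE p K g := by
  unfold EE
  rw [← Finset.sum_sub_distrib]
  apply Finset.sum_congr rfl; intros; ring

lemma EE_sum {ι : Type*} (s : Finset ι) (K : Finset α) (f : ι → Finset α → ℝ) :
    EE p K (fun E => ∑ i ∈ s, f i E) = ∑ i ∈ s, EE p K (f i) := by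
  unfold EE
  rw [Finset.sum_comm]
  apply Finset.sum_congr rfl; intros; rw [Finset.mul_sum]

lemma EE_subset_ind {D K : Finset α} (h : D ⊆ K) :
    EE p K (fun E => if D ⊆ E then (1 : ℝ) else 0) = p ^ D.card := by
  induction K using Finset.induction_on generalizing D with
  | empty =>
    have : D = ∅ := Finset.subset_empty.1 h
    subst this; simp [EE_empty]
  | insert a K ha ih =>
    rw [EE_insert ha]
    by_cases haD : a ∈ D
    · have h1 : EE p K (fun E => if D ⊆ E then (1 : ℝ) else 0) = 0 := by
        refine Eq.trans (EE_congr (g := fun _ => (0 : ℝ)) ?_) (EE_const (p := p) K (0 : ℝ))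
        intro E hE
        rw [if_neg]
        intro h'
        exact ha (hE (h' haD))
      have h2 : EE p K (fun E => if D ⊆ insert a E then (1 : ℝ) else 0) =
          p ^ (D.erase a).card := by
        have h3 : D.erase a ⊆ K := by
          intro x hx
          exact (Finset.mem_insert.1 (h (Finset.mem_of_mem_erase hx))).resolve_left
            (Finset.ne_of_mem_erase hx)
        rw [← ih h3]
        apply EE_congr
        intro E hE
        simp only [Finset.subset_insert_iff]
      rw [h1, h2, mul_zero, zero_add, ← pow_succ', Finset.card_erase_add_one haD]
    · have hDK : D ⊆ K := (Finset.subset_insert_iff_of_notMem haD).1 h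
      have h2 : EE p K (fun E => if D ⊆ insert a E then (1 : ℝ) else 0) =
          EE p K (fun E => if D ⊆ E then (1 : ℝ) else 0) := by
        apply EE_congr
        intro E hE
        simp only [Finset.subset_insert_iff_of_notMem haD]
      rw [h2, ih hDK]; ring

lemma EE_subset_ind' {D K : Finset α} [inst : ∀ E : Finset α, Decidable (D ⊆ E)] (h : D ⊆ K) :
    EE p K (fun E => if D ⊆ E then (1 : ℝ) else 0) = p ^ D.card := by
  rw [← EE_subset_ind (p := p) h]
  apply EE_congr
  intro E _
  by_cases h1 : D ⊆ E
  · rw [if_pos h1, if_pos h1]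
  · rw [if_neg h1, if_neg h1]

lemma EE_anti_pool (hp0 : 0 ≤ p) (hp1 : p ≤ 1) {K K' : Finset α} (h : K' ⊆ K)
    {f : Finset α → ℝ} (hf : ∀ E E', E ⊆ E' → f E' ≤ f E) : EE p K f ≤ EE p K' f := by
  have h1 : K = K' ∪ (K \ K') := by rw [Finset.union_sdiff_of_subset h]
  rw [h1, EE_union Finset.disjoint_sdiff]
  calc _ ≤ EE p (K \ K') (fun _ => EE p K' f) := by
        apply EE_mono hp0 hp1
        intro E2 _
        apply EE_mono hp0 hp1
        intro E1 _
        exact hf _ _ Finset.subset_union_left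
    _ = _ := EE_const _ _

lemma EE_mono_p {q : ℝ} (hp0 : 0 ≤ p) (hpq : p ≤ q) (hq1 : q ≤ 1) {K : Finset α}
    {f : Finset α → ℝ} (hf : ∀ E E', E ⊆ E' → f E ≤ f E') : EE p K f ≤ EE q K f := by
  induction K using Finset.induction_on generalizing f with
  | empty => simp [EE_empty]
  | insert a K ha ih =>
    rw [EE_insert ha, EE_insert ha]
    have h1 := ih hf
    have h2 := ih (f := fun E => f (insert a E))
      (fun E E' h => hf _ _ (Finset.insert_subset_insert _ h))
    have h3 : EE q K f ≤ EE q K (fun E => f (insert a E)) :=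
      EE_mono (hp0.trans hpq) hq1 (fun E _ => hf _ _ (Finset.subset_insert _ _))
    nlinarith [mul_le_mul_of_nonneg_left h1 (by linarith : 0 ≤ 1 - p),
      mul_le_mul_of_nonneg_left h2 hp0, mul_nonneg (sub_nonneg.2 hpq) (sub_nonneg.2 h3)]

lemma gProb_eq_EE (n k : ℕ) (p : ℝ) (A : Finset (Finset (Fin n)) → Prop) :
    gProb n k p A = EE p (kSets n k) (fun E => if A E then (1 : ℝ) else 0) := by
  unfold gProb EE
  rw [Finset.sum_filter]
  apply Finset.sum_congr rfl
  intro E _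
  beta_reduce
  by_cases h : A E
  · rw [if_pos h, if_pos h, mul_one]
  · rw [if_neg h, if_neg h, mul_zero]

end EEsec


/-! ### One step of the random process -/

lemma card_agree {n N : ℕ} (P : Finset (Fin N)) (c : Fin N → Fin n) :
    ((Finset.univ : Finset (Fin N → Fin n)).filter (fun c' => ∀ q ∈ P, c' q = c q)).card
      = n ^ (N - P.card) := by
  have h : ((Finset.univ : Finset (Fin N → Fin n)).filter (fun c' => ∀ q ∈ P, c' q = c q))
      = Fintype.piFinset (fun q => if q ∈ P then {c q} else Finset.univ) := by
    ext c'
    simp only [Finset.mem_filter, Finset.mem_univ, true_and, Fintype.mem_piFinset]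
    constructor
    · intro h q
      by_cases hq : q ∈ P
      · simp [hq, h q hq]
      · simp [hq]
    · intro h q hq
      have := h q
      simpa [hq] using this
  rw [h, Fintype.card_piFinset]
  have h2 : ∀ q : Fin N, (if q ∈ P then ({c q} : Finset (Fin n)) else Finset.univ).card
      = if q ∈ P then 1 else n := by
    intro q; split_ifs <;> simp
  simp only [h2]
  rw [Finset.prod_ite]
  simp only [Finset.prod_const_one, one_mul, Finset.prod_const]
  congr 1
  have h3 : (Finset.univ.filter (fun q => q ∉ P)) = Pᶜ := by ext; simp
  rw [h3, Finset.card_compl, Fintype.card_fin]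

lemma step_sel {n N t : ℕ} {p θ : ℝ} (hp0 : 0 ≤ p) (hp1 : p ≤ 1)
    (win : Fin t → Finset (Fin N)) (winInj : Function.Injective win) (R : Finset (Fin N))
    (hun : R ∪ Finset.univ.biUnion win = Finset.univ)
    (hθ0 : 0 ≤ θ)
    (hnum : ∀ I : Finset (Fin t), I ≠ Finset.univ →
      (n : ℝ) ^ (N - (R ∪ I.biUnion win).card) * p ^ (t - I.card) ≤ θ)
    (hθ : (2 : ℝ) ^ t * θ ≤ 1 / 2)
    (a : Fin N → Fin n) (χ : Fin n → Fin N) (Cand : Finset (Fin N → Fin n))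
    (hR : ∀ c ∈ Cand, ∀ q ∈ R, c q = a q)
    (hχ : ∀ c ∈ Cand, ∀ q, χ (c q) = q)
    (T : Finset (Finset (Fin n))) (hT : ∀ c ∈ Cand, ∀ x, (win x).image c ∈ T) :
    ∃ sel : Finset (Finset (Fin n)) → Option (Fin N → Fin n),
      (∀ E c, sel E = some c → c ∈ Cand ∧ ∀ x, (win x).image c ∈ E) ∧
      ∀ c ∈ Cand, p ^ t / 2 ≤ EE p T (fun E => if sel E = some c then (1 : ℝ) else 0) := by
  set ed : (Fin N → Fin n) → Finset (Finset (Fin n)) :=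
    fun c => Finset.univ.image (fun x => (win x).image c) with hed
  have hedE : ∀ c E, ed c ⊆ E ↔ ∀ x, (win x).image c ∈ E := by
    intro c E
    simp only [hed, Finset.image_subset_iff, Finset.mem_univ, true_implies]
  -- colours determine windows
  have hcol : ∀ c ∈ Cand, ∀ x, ((win x).image c).image χ = win x := by
    intro c hc x
    rw [Finset.image_image]
    have : χ ∘ c = id := funext (hχ c hc)
    rw [this, Finset.image_id]
  have hcross : ∀ c ∈ Cand, ∀ c' ∈ Cand, ∀ x y, (win x).image c = (win y).image c' → x = y := by
    intro c hc c' hc' x y h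
    apply winInj
    rw [← hcol c hc x, ← hcol c' hc' y, h]
  have hagree : ∀ c ∈ Cand, ∀ c' ∈ Cand, ∀ x, (win x).image c = (win x).image c' →
      ∀ q ∈ win x, c' q = c q := by
    intro c hc c' hc' x h q hq
    have h1 : c' q ∈ (win x).image c := by rw [h]; exact Finset.mem_image_of_mem _ hq
    obtain ⟨q', hq', h2⟩ := Finset.mem_image.1 h1
    have h3 := congrArg χ h2
    rw [hχ c hc, hχ c' hc'] at h3
    rw [← h2, h3]
  have hedcard : ∀ c ∈ Cand, (ed c).card = t := by
    intro c hc
    simp only [hed]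
    rw [Finset.card_image_of_injective, Finset.card_univ, Fintype.card_fin]
    intro x y h
    exact hcross c hc c hc x y h
  set sel : Finset (Finset (Fin n)) → Option (Fin N → Fin n) := fun E =>
    if h : ∃ c, c ∈ Cand ∧ ed c ⊆ E ∧ ∀ c' ∈ Cand, ed c' ⊆ E → c' = c then some h.choose else none
    with hsel
  refine ⟨sel, ?_, ?_⟩
  · intro E c h
    simp only [hsel] at h
    split_ifs at h with h1
    have h2 := h1.choose_spec
    have h3 := Option.some.inj h
    rw [h3] at h2
    exact ⟨h2.1, (hedE _ _).1 h2.2.1⟩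
  intro c hc
  set I : (Fin N → Fin n) → Finset (Fin t) :=
    fun c' => Finset.univ.filter (fun x => (win x).image c = (win x).image c') with hI
  have hind : ∀ E ⊆ T, (if ed c ⊆ E then (1 : ℝ) else 0)
      - ∑ c' ∈ Cand.erase c, (if ed c ∪ ed c' ⊆ E then (1 : ℝ) else 0)
      ≤ (if sel E = some c then (1 : ℝ) else 0) := by
    intro E _
    have hnn : ∀ c' ∈ Cand.erase c, (0 : ℝ) ≤ (if ed c ∪ ed c' ⊆ E then (1 : ℝ) else 0) := by
      intro c' _; split_ifs <;> norm_num
    have hnn' := Finset.sum_nonneg hnn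
    by_cases h1 : ed c ⊆ E
    · by_cases h2 : ∃ c' ∈ Cand.erase c, ed c' ⊆ E
      · obtain ⟨c', hc', h3⟩ := h2
        have h4 := Finset.single_le_sum hnn hc'
        rw [if_pos (Finset.union_subset h1 h3)] at h4
        rw [if_pos h1]
        have : (0 : ℝ) ≤ (if sel E = some c then (1 : ℝ) else 0) := by split_ifs <;> norm_num
        linarith
      · have h3 : ∃ c, c ∈ Cand ∧ ed c ⊆ E ∧ ∀ c' ∈ Cand, ed c' ⊆ E → c' = c := by
          refine ⟨c, hc, h1, ?_⟩
          intro c' hc' h4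
          by_contra hne
          exact h2 ⟨c', Finset.mem_erase.2 ⟨hne, hc'⟩, h4⟩
        have h4 : sel E = some c := by
          simp only [hsel]
          rw [dif_pos h3]
          congr 1
          exact (h3.choose_spec.2.2 c hc h1).symm
        rw [if_pos h1, if_pos h4]
        linarith
    · rw [if_neg h1]
      have : (0 : ℝ) ≤ (if sel E = some c then (1 : ℝ) else 0) := by split_ifs <;> norm_num
      linarith
  have hedT : ∀ c ∈ Cand, ed c ⊆ T := fun c hc => (hedE c T).2 (hT c hc)
  have hE1 := EE_mono hp0 hp1 hind
  rw [EE_sub, EE_sum, EE_subset_ind' (hedT c hc), hedcard c hc] at hE1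
  have hpair : ∀ c' ∈ Cand.erase c,
      EE p T (fun E => if ed c ∪ ed c' ⊆ E then (1 : ℝ) else 0) ≤ p ^ t * p ^ (t - (I c').card) := by
    intro c' hc'
    have hc'C := Finset.mem_of_mem_erase hc'
    rw [EE_subset_ind' (Finset.union_subset (hedT c hc) (hedT c' hc'C)), ← pow_add]
    apply pow_le_pow_of_le_one hp0 hp1
    have h1 : (ed c ∩ ed c').card ≤ (I c').card := by
      have : ed c ∩ ed c' ⊆ (I c').image (fun x => (win x).image c) := by
        intro e he
        obtain ⟨he1, he2⟩ := Finset.mem_inter.1 he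
        obtain ⟨x, -, hx⟩ := Finset.mem_image.1 he1
        obtain ⟨y, -, hy⟩ := Finset.mem_image.1 he2
        have hxy := hcross c hc c' hc'C x y (hx.trans hy.symm)
        subst hxy
        refine Finset.mem_image.2 ⟨x, ?_, hx⟩
        simp only [hI, Finset.mem_filter, Finset.mem_univ, true_and]
        exact hx.trans hy.symm
      exact (Finset.card_le_card this).trans Finset.card_image_le
    have h2 := Finset.card_union_add_card_inter (ed c) (ed c')
    rw [hedcard c hc, hedcard c' hc'C] at h2
    have h3 : (I c').card ≤ t := by
      simpa using Finset.card_le_univ (I c')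
    omega
  have hsum : ∑ c' ∈ Cand.erase c, p ^ (t - (I c').card) ≤ 1 / 2 := by
    rw [← Finset.sum_fiberwise (Cand.erase c) I]
    calc _ ≤ ∑ _J : Finset (Fin t), θ := by
          apply Finset.sum_le_sum
          intro J _
          by_cases hJ : J = Finset.univ
          · have : (Cand.erase c).filter (fun c' => I c' = J) = ∅ := by
              apply Finset.filter_eq_empty_iff.2
              intro c' hc' hIJ
              have hc'C := Finset.mem_of_mem_erase hc'
              apply Finset.ne_of_mem_erase hc'
              funext q
              have hq : q ∈ R ∪ Finset.univ.biUnion win := by rw [hun]; exact Finset.mem_univ _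
              rcases Finset.mem_union.1 hq with hq | hq
              · rw [hR c hc q hq, hR c' hc'C q hq]
              · obtain ⟨x, -, hx⟩ := Finset.mem_biUnion.1 hq
                have hxI : x ∈ I c' := by rw [hIJ, hJ]; exact Finset.mem_univ _
                exact hagree c hc c' hc'C x (Finset.mem_filter.1 hxI).2 q hx
            rw [this, Finset.sum_empty]; exact hθ0
          · have h1 : ∑ c' ∈ (Cand.erase c).filter (fun c' => I c' = J), p ^ (t - (I c').card)
                = ((Cand.erase c).filter (fun c' => I c' = J)).card * p ^ (t - J.card) := by
              rw [← nsmul_eq_mul, ← Finset.sum_const]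
              apply Finset.sum_congr rfl
              intro c' hc'
              rw [(Finset.mem_filter.1 hc').2]
            rw [h1]
            refine le_trans ?_ (hnum J hJ)
            apply mul_le_mul_of_nonneg_right _ (by positivity)
            rw [← Nat.cast_pow, ← card_agree (R ∪ J.biUnion win) c]
            apply Nat.cast_le.2
            apply Finset.card_le_card
            intro c' hc'
            obtain ⟨hc'1, hIJ⟩ := Finset.mem_filter.1 hc'
            have hc'C := Finset.mem_of_mem_erase hc'1
            refine Finset.mem_filter.2 ⟨Finset.mem_univ _, ?_⟩
            intro q hq
            rcases Finset.mem_union.1 hq with hq | hq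
            · rw [hR c hc q hq, hR c' hc'C q hq]
            · obtain ⟨x, hxJ, hx⟩ := Finset.mem_biUnion.1 hq
              have hxI : x ∈ I c' := by rw [hIJ]; exact hxJ
              exact hagree c hc c' hc'C x (Finset.mem_filter.1 hxI).2 q hx
      _ = (2 : ℝ) ^ t * θ := by
          rw [Finset.sum_const, Finset.card_univ, Fintype.card_finset, Fintype.card_fin,
            nsmul_eq_mul]
          push_cast; ring
      _ ≤ 1 / 2 := hθ
  have hs2 := Finset.sum_le_sum hpair
  rw [← Finset.mul_sum] at hs2
  have hpt : 0 ≤ p ^ t := by positivity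
  nlinarith [mul_le_mul_of_nonneg_left hsum hpt]


/-! ### The random greedy process -/

lemma card_sections {n N : ℕ} (c : Fin N → Fin n) (hc : Function.Injective c) :
    ((Finset.univ : Finset (Fin n → Fin N)).filter (fun χ => ∀ q, χ (c q) = q)).card * N ^ N
      = N ^ n := by
  have h : ((Finset.univ : Finset (Fin n → Fin N)).filter (fun χ => ∀ q, χ (c q) = q))
      = Fintype.piFinset (fun v => if h : ∃ q, c q = v then {h.choose} else Finset.univ) := by
    ext χ
    simp only [Finset.mem_filter, Finset.mem_univ, true_and, Fintype.mem_piFinset]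
    constructor
    · intro h v
      by_cases hv : ∃ q, c q = v
      · rw [dif_pos hv, Finset.mem_singleton]
        have h1 := h hv.choose
        rwa [hv.choose_spec] at h1
      · simp [hv]
    · intro h q
      have h1 := h (c q)
      have hv : ∃ q', c q' = c q := ⟨q, rfl⟩
      rw [dif_pos hv, Finset.mem_singleton] at h1
      rw [h1]
      exact hc hv.choose_spec
  rw [h, Fintype.card_piFinset]
  have h2 : ∀ v : Fin n, (if h : ∃ q, c q = v then ({h.choose} : Finset (Fin N))
      else Finset.univ).card = if v ∈ Finset.univ.image c then 1 else N := by
    intro v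
    by_cases hv : ∃ q, c q = v
    · have : v ∈ Finset.univ.image c := by simpa using hv
      rw [dif_pos hv, if_pos this, Finset.card_singleton]
    · have : v ∉ Finset.univ.image c := by simpa using hv
      rw [dif_neg hv, if_neg this]; simp
  simp only [h2]
  rw [Finset.prod_ite]
  simp only [Finset.prod_const_one, one_mul, Finset.prod_const]
  rw [← pow_add]
  congr 1
  have h3 : (Finset.univ.filter (fun v => v ∉ Finset.univ.image c)) = (Finset.univ.image c)ᶜ := by
    ext; simp
  have h4 : (Finset.univ.image c).card = N := by
    rw [Finset.card_image_of_injective _ hc]; simp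
  have h5 : N ≤ n := by
    have := Fintype.card_le_of_injective c hc
    simpa using this
  rw [h3, Finset.card_compl, Fintype.card_fin, h4]
  omega

/-- Edges avoiding `Z`. -/
noncomputable def pool (n k : ℕ) (Z : Finset (Fin n)) : Finset (Finset (Fin n)) :=
  (kSets n k).filter (fun e => Disjoint e Z)

/-- Admissible families: disjoint injective tuples avoiding `Z` whose windows are in `E`. -/
def GoodFam {n N t : ℕ} (win : Fin t → Finset (Fin N)) (j : ℕ) (Z : Finset (Fin n))
    (E : Finset (Finset (Fin n))) (D : Finset (Fin N → Fin n)) : Prop :=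
  D.card ≤ j ∧ (∀ c ∈ D, Function.Injective c) ∧
  (∀ c ∈ D, ∀ c' ∈ D, c ≠ c' → ∀ m m', c m ≠ c' m') ∧
  (∀ c ∈ D, ∀ m, c m ∉ Z) ∧ ∀ c ∈ D, ∀ x, (win x).image c ∈ E

lemma goodFam_empty {n N t : ℕ} (win : Fin t → Finset (Fin N)) (j : ℕ) (Z : Finset (Fin n))
    (E : Finset (Finset (Fin n))) : GoodFam win j Z E ∅ := by
  simp [GoodFam]

/-- The potential of a family. -/
noncomputable def pot {n N : ℕ} {ι : Type} [Fintype ι] (F : ι → Finset (Fin N → Fin n))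
    (w : ι → ℝ) (D : Finset (Fin N → Fin n)) : ℝ :=
  ∑ i, w i * (1 / 2 : ℝ) ^ (D.filter (fun c => c ∈ F i)).card

/-- The minimal potential. -/
noncomputable def YY {n N t : ℕ} {ι : Type} [Fintype ι] (win : Fin t → Finset (Fin N))
    (F : ι → Finset (Fin N → Fin n)) (j : ℕ) (Z : Finset (Fin n)) (w : ι → ℝ)
    (E : Finset (Finset (Fin n))) : ℝ :=
  (Finset.univ.filter (fun D => GoodFam win j Z E D)).inf'
    ⟨∅, Finset.mem_filter.2 ⟨Finset.mem_univ _, goodFam_empty win j Z E⟩⟩ (pot F w)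

section YYsec
variable {n N t : ℕ} {ι : Type} [Fintype ι] {win : Fin t → Finset (Fin N)}
  {F : ι → Finset (Fin N → Fin n)}

lemma YY_le {j : ℕ} {Z : Finset (Fin n)} {w : ι → ℝ} {E : Finset (Finset (Fin n))}
    {D : Finset (Fin N → Fin n)} (h : GoodFam win j Z E D) : YY win F j Z w E ≤ pot F w D :=
  Finset.inf'_le _ (Finset.mem_filter.2 ⟨Finset.mem_univ _, h⟩)

lemma YY_exists (j : ℕ) (Z : Finset (Fin n)) (w : ι → ℝ) (E : Finset (Finset (Fin n))) :
    ∃ D, GoodFam win j Z E D ∧ YY win F j Z w E = pot F w D := by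
  obtain ⟨D, hD, h⟩ := Finset.exists_mem_eq_inf'
    (s := Finset.univ.filter (fun D => GoodFam win j Z E D))
    ⟨∅, Finset.mem_filter.2 ⟨Finset.mem_univ _, goodFam_empty win j Z E⟩⟩ (pot F w)
  exact ⟨D, (Finset.mem_filter.1 hD).2, h⟩

lemma YY_anti {j : ℕ} {Z : Finset (Fin n)} {w : ι → ℝ} (E E' : Finset (Finset (Fin n)))
    (h : E ⊆ E') : YY win F j Z w E' ≤ YY win F j Z w E := by
  obtain ⟨D, hD, h1⟩ := YY_exists (win := win) (F := F) j Z w E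
  rw [h1]
  apply YY_le
  obtain ⟨a, b, c, d, e⟩ := hD
  exact ⟨a, b, c, d, fun c hc x => h (e c hc x)⟩

/-- adding nothing. -/
lemma YY_skip {j : ℕ} {Z : Finset (Fin n)} (v : Fin n) {w : ι → ℝ}
    {E E' : Finset (Finset (Fin n))}
    (h : E ⊆ E') : YY win F (j + 1) Z w E' ≤ YY win F j (insert v Z) w E := by
  obtain ⟨D, hD, h1⟩ := YY_exists (win := win) (F := F) j (insert v Z) w E
  rw [h1]
  apply YY_le
  obtain ⟨a, b, c, d, e⟩ := hD
  exact ⟨a.trans (Nat.le_succ _), b, c, fun c hc m hm => d c hc m (Finset.mem_insert_of_mem hm),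
    fun c hc x => h (e c hc x)⟩

/-- adding one tuple. -/
lemma YY_add (hN : 0 < N) {j : ℕ} {Z : Finset (Fin n)} {w : ι → ℝ}
    {E E' : Finset (Finset (Fin n))}
    (h : E ⊆ E') (c : Fin N → Fin n) (hc : Function.Injective c) (hcZ : ∀ m, c m ∉ Z)
    (hcE : ∀ x, (win x).image c ∈ E') :
    YY win F (j + 1) Z w E' ≤ YY win F j (Z ∪ Finset.univ.image c)
      (fun i => w i * (if c ∈ F i then 1 / 2 else 1)) E := by
  obtain ⟨D, hD, h1⟩ := YY_exists (win := win) (F := F) j (Z ∪ Finset.univ.image c)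
    (fun i => w i * (if c ∈ F i then 1 / 2 else 1)) E
  rw [h1]
  obtain ⟨hD1, hD2, hD3, hD4, hD5⟩ := hD
  have hne : ∀ c' ∈ D, ∀ m m', c' m ≠ c m' := by
    intro c' hc' m m' heq
    apply hD4 c' hc' m
    rw [heq]
    exact Finset.mem_union_right _ (Finset.mem_image_of_mem _ (Finset.mem_univ _))
  have hcD : c ∉ D := fun hcD => hne c hcD ⟨0, hN⟩ ⟨0, hN⟩ rfl
  have hg : GoodFam win (j + 1) Z E' (insert c D) := by
    refine ⟨?_, ?_, ?_, ?_, ?_⟩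
    · rw [Finset.card_insert_of_notMem hcD]; omega
    · intro c' hc'
      rcases Finset.mem_insert.1 hc' with rfl | hc'
      · exact hc
      · exact hD2 c' hc'
    · intro c1 h1 c2 h2 hn m m'
      rcases Finset.mem_insert.1 h1 with e1 | h1 <;> rcases Finset.mem_insert.1 h2 with e2 | h2
      · exact absurd (e1.trans e2.symm) hn
      · rw [e1]; exact (hne c2 h2 m' m).symm
      · rw [e2]; exact hne c1 h1 m m'
      · exact hD3 c1 h1 c2 h2 hn m m'
    · intro c' hc' m
      rcases Finset.mem_insert.1 hc' with rfl | hc'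
      · exact hcZ m
      · exact fun hm => hD4 c' hc' m (Finset.mem_union_left _ hm)
    · intro c' hc' x
      rcases Finset.mem_insert.1 hc' with rfl | hc'
      · exact hcE x
      · exact h (hD5 c' hc' x)
  refine (YY_le hg).trans (le_of_eq ?_)
  unfold pot
  apply Finset.sum_congr rfl
  intro i _
  rw [Finset.filter_insert]
  beta_reduce
  by_cases hi : c ∈ F i
  · rw [if_pos hi, if_pos hi, Finset.card_insert_of_notMem (by simp [hcD]), pow_succ]
    ring
  · rw [if_neg hi, if_neg hi]; ring

lemma pool_subset {k : ℕ} {Z Z' : Finset (Fin n)} (h : Z ⊆ Z') : pool n k Z' ⊆ pool n k Z := by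
  intro e he
  obtain ⟨h1, h2⟩ := Finset.mem_filter.1 he
  exact Finset.mem_filter.2 ⟨h1, h2.mono_right h⟩

/-- The averaging count. -/
lemma avg_count {R : Finset (Fin N)} (G : Finset (Fin N → Fin n))
    (hG : ∀ c ∈ G, Function.Injective c) :
    (∑ ω : (Fin N → Fin n) × (Fin n → Fin N),
      (G.filter (fun c => (∀ q ∈ R, c q = ω.1 q) ∧ ∀ q, ω.2 (c q) = q)).card) * N ^ N
      = G.card * n ^ (N - R.card) * N ^ n := by
  have h1 : ∑ ω : (Fin N → Fin n) × (Fin n → Fin N),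
      (G.filter (fun c => (∀ q ∈ R, c q = ω.1 q) ∧ ∀ q, ω.2 (c q) = q)).card
      = ∑ c ∈ G, ((Finset.univ : Finset ((Fin N → Fin n) × (Fin n → Fin N))).filter
          (fun ω => (∀ q ∈ R, c q = ω.1 q) ∧ ∀ q, ω.2 (c q) = q)).card := by
    simp only [Finset.card_filter]
    rw [Finset.sum_comm]
  rw [h1, Finset.sum_mul]
  rw [mul_assoc, ← smul_eq_mul, ← Finset.sum_const]
  apply Finset.sum_congr rfl
  intro c hc
  have h2 : ((Finset.univ : Finset ((Fin N → Fin n) × (Fin n → Fin N))).filter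
          (fun ω => (∀ q ∈ R, c q = ω.1 q) ∧ ∀ q, ω.2 (c q) = q))
      = ((Finset.univ : Finset (Fin N → Fin n)).filter (fun c' => ∀ q ∈ R, c' q = c q)) ×ˢ
        ((Finset.univ : Finset (Fin n → Fin N)).filter (fun χ => ∀ q, χ (c q) = q)) := by
    ext ω
    simp only [Finset.mem_filter, Finset.mem_univ, true_and, Finset.mem_product]
    constructor
    · rintro ⟨h, h'⟩; exact ⟨fun q hq => (h q hq).symm, h'⟩
    · rintro ⟨h, h'⟩; exact ⟨fun q hq => (h q hq).symm, h'⟩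
  rw [h2, Finset.card_product, card_agree, mul_assoc, card_sections c (hG c hc)]

theorem main_process {k : ℕ} {p θ τ c0 κ : ℝ} (hn : 0 < n) (hN : 0 < N)
    (hp0 : 0 ≤ p) (hp1 : p ≤ 1)
    (winInj : Function.Injective win) (hwk : ∀ x, (win x).card = k)
    (R : Finset (Fin N)) (q0 : Fin N) (hq0R : q0 ∈ R) (hq0w : ∀ x, q0 ∈ win x)
    (hun : R ∪ Finset.univ.biUnion win = Finset.univ)
    (hθ0 : 0 ≤ θ)
    (hnum : ∀ I : Finset (Fin t), I ≠ Finset.univ →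
      (n : ℝ) ^ (N - (R ∪ I.biUnion win).card) * p ^ (t - I.card) ≤ θ)
    (hθ : (2 : ℝ) ^ t * θ ≤ 1 / 2)
    (hτ : p ^ t * (n : ℝ) ^ (N - R.card) = τ)
    (hκ : κ = τ * c0 / (4 * (N : ℝ) ^ N)) (hκ1 : κ ≤ 1)
    (M : ℕ) (hFinj : ∀ i, ∀ c ∈ F i, Function.Injective c)
    (hdens : ∀ i, ∀ Z : Finset (Fin n), Z.card ≤ M →
      c0 * (n : ℝ) ^ N ≤ (((F i).filter (fun c => ∀ m, c m ∉ Z)).card : ℝ))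
    (j : ℕ) : ∀ (Z : Finset (Fin n)) (w : ι → ℝ), (∀ i, 0 ≤ w i) → Z.card + N * j ≤ M →
      EE p (pool n k Z) (YY win F j Z w) ≤ (1 - κ) ^ j * ∑ i, w i := by
  induction j with
  | zero =>
    intro Z w hw _
    have h1 : EE p (pool n k Z) (YY win F 0 Z w) ≤ EE p (pool n k Z) (fun _ => ∑ i, w i) := by
      apply EE_mono hp0 hp1
      intro E _
      refine (YY_le (goodFam_empty win 0 Z E)).trans (le_of_eq ?_)
      simp [pot]
    rw [EE_const] at h1
    simpa using h1
  | succ j ih =>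
    intro Z w hw hZ
    have hκ0 : 0 ≤ 1 - κ := by linarith
    have hκj : 0 ≤ (1 - κ) ^ j := pow_nonneg hκ0 j
    set L := EE p (pool n k Z) (YY win F (j + 1) Z w) with hL
    set S : (Fin N → Fin n) × (Fin n → Fin N) → ι → Finset (Fin N → Fin n) := fun ω i =>
      ((F i).filter (fun c => ∀ m, c m ∉ Z)).filter
        (fun c => (∀ q ∈ R, c q = ω.1 q) ∧ ∀ q, ω.2 (c q) = q) with hS
    have key : ∀ ω, L ≤ (1 - κ) ^ j * ∑ i, w i * (1 - 1 / 4 * p ^ t * ((S ω i).card : ℝ)) := by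
      rintro ⟨a, χ⟩
      set v := a q0 with hv
      set Cand : Finset (Fin N → Fin n) := Finset.univ.filter (fun c => (∀ m, c m ∉ Z) ∧
        (∀ q ∈ R, c q = a q) ∧ ∀ q, χ (c q) = q) with hCand
      set T := (pool n k Z).filter (fun e => v ∈ e) with hTdef
      have hCi : ∀ c ∈ Cand, Function.Injective c := by
        intro c hc q q' h
        have h1 := (Finset.mem_filter.1 hc).2.2.2
        rw [← h1 q, ← h1 q', h]
      have hT : ∀ c ∈ Cand, ∀ x, (win x).image c ∈ T := by
        intro c hc x
        obtain ⟨-, h1, h2, h3⟩ := Finset.mem_filter.1 hc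
        refine Finset.mem_filter.2 ⟨Finset.mem_filter.2 ⟨?_, ?_⟩, ?_⟩
        · refine Finset.mem_powersetCard.2 ⟨Finset.subset_univ _, ?_⟩
          rw [Finset.card_image_of_injective _ (hCi c hc), hwk]
        · rw [Finset.disjoint_left]
          intro y hy
          obtain ⟨q, -, rfl⟩ := Finset.mem_image.1 hy
          exact h1 q
        · rw [hv, ← h2 q0 hq0R]
          exact Finset.mem_image_of_mem _ (hq0w x)
      obtain ⟨sel, hsel1, hsel2⟩ := step_sel hp0 hp1 win winInj R hun hθ0 hnum hθ a χ Cand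
        (fun c hc => (Finset.mem_filter.1 hc).2.2.1) (fun c hc => (Finset.mem_filter.1 hc).2.2.2)
        T hT
      have hsplit : pool n k Z = pool n k (insert v Z) ∪ T := by
        ext e
        simp only [pool, hTdef, Finset.mem_union, Finset.mem_filter, Finset.disjoint_insert_right]
        tauto
      have hdisj : Disjoint (pool n k (insert v Z)) T := by
        rw [Finset.disjoint_left]
        intro e he1 he2
        simp only [pool, hTdef, Finset.mem_filter, Finset.disjoint_insert_right] at he1 he2
        exact he1.2.1 he2.2
      have hin : ∀ E2 ⊆ T, EE p (pool n k (insert v Z))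
          (fun E1 => YY win F (j + 1) Z w (E1 ∪ E2)) ≤ (1 - κ) ^ j *
          ∑ i, w i * (1 - 1 / 2 * ∑ c ∈ S (a, χ) i, (if sel E2 = some c then (1 : ℝ) else 0)) := by
        intro E2 _
        cases hs : sel E2 with
        | none =>
          have hcardv : (insert v Z).card ≤ Z.card + 1 := Finset.card_insert_le _ _
          have h1 := ih (insert v Z) w hw (by nlinarith)
          refine le_trans ?_ (h1.trans (le_of_eq ?_))
          · apply EE_mono hp0 hp1
            intro E1 _
            exact YY_skip v Finset.subset_union_left
          · simp
        | some c =>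
          obtain ⟨hcC, hcE⟩ := hsel1 E2 c hs
          obtain ⟨-, hc1, hc2, hc3⟩ := Finset.mem_filter.1 hcC
          have hcardZ : (Z ∪ Finset.univ.image c).card ≤ Z.card + N := by
            refine (Finset.card_union_le _ _).trans ?_
            have := Finset.card_image_le (s := Finset.univ) (f := c)
            simp at this
            omega
          have h1 := ih (Z ∪ Finset.univ.image c) (fun i => w i * (if c ∈ F i then 1 / 2 else 1))
            (fun i => mul_nonneg (hw i) (by split_ifs <;> norm_num)) (by nlinarith)
          have hsub : insert v Z ⊆ Z ∪ Finset.univ.image c := by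
            intro y hy
            rcases Finset.mem_insert.1 hy with rfl | hy
            · apply Finset.mem_union_right
              rw [hv, ← hc2 q0 hq0R]
              exact Finset.mem_image_of_mem _ (Finset.mem_univ _)
            · exact Finset.mem_union_left _ hy
          have h2 := EE_anti_pool hp0 hp1 (pool_subset (k := k) hsub)
            (f := YY win F j (Z ∪ Finset.univ.image c)
              (fun i => w i * (if c ∈ F i then 1 / 2 else 1))) YY_anti
          refine le_trans ?_ (h2.trans (h1.trans ?_))
          · apply EE_mono hp0 hp1
            intro E1 _
            exact YY_add hN Finset.subset_union_left c (hCi c hcC) hc1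
              (fun x => Finset.mem_union_right _ (hcE x))
          · apply mul_le_mul_of_nonneg_left _ hκj
            apply Finset.sum_le_sum
            intro i _
            apply mul_le_mul_of_nonneg_left _ (hw i)
            simp only [Option.some.injEq, Finset.sum_ite_eq]
            have : c ∈ S (a, χ) i ↔ c ∈ F i := by
              simp only [hS, Finset.mem_filter]
              tauto
            by_cases hcF : c ∈ F i
            · rw [if_pos hcF, if_pos (this.2 hcF)]; norm_num
            · rw [if_neg hcF, if_neg (fun h => hcF (this.1 h))]; norm_num
      rw [hL, hsplit, EE_union hdisj]
      refine (EE_mono hp0 hp1 hin).trans ?_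
      rw [EE_smul]
      apply mul_le_mul_of_nonneg_left _ hκj
      rw [EE_sum]
      apply Finset.sum_le_sum
      intro i _
      rw [EE_smul]
      apply mul_le_mul_of_nonneg_left _ (hw i)
      rw [EE_sub, EE_const, EE_smul, EE_sum]
      have h3 : ∑ c ∈ S (a, χ) i, p ^ t / 2 ≤ ∑ c ∈ S (a, χ) i,
          EE p T (fun E => if sel E = some c then (1 : ℝ) else 0) := by
        apply Finset.sum_le_sum
        intro c hc
        apply hsel2
        simp only [hS, Finset.mem_filter] at hc
        simp only [hCand, Finset.mem_filter, Finset.mem_univ, true_and]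
        tauto
      rw [Finset.sum_const, nsmul_eq_mul] at h3
      linarith
    -- averaging over ω
    have hΩ : ((Fintype.card ((Fin N → Fin n) × (Fin n → Fin N)) : ℕ) : ℝ)
        = (n : ℝ) ^ N * (N : ℝ) ^ n := by
      simp
    have hNN : (0 : ℝ) < (N : ℝ) ^ N := by positivity
    have hsumω := Finset.sum_le_sum (fun ω (_ : ω ∈ Finset.univ) => key ω)
    rw [Finset.sum_const, Finset.card_univ, nsmul_eq_mul, hΩ, ← Finset.mul_sum,
      Finset.sum_comm] at hsumω
    have hΩpos : (0 : ℝ) < (n : ℝ) ^ N * (N : ℝ) ^ n := by positivity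
    have hper : ∀ i, ∑ ω, w i * (1 - 1 / 4 * p ^ t * ((S ω i).card : ℝ)) ≤
        w i * (((n : ℝ) ^ N * (N : ℝ) ^ n) * (1 - κ)) := by
      intro i
      rw [← Finset.mul_sum]
      apply mul_le_mul_of_nonneg_left _ (hw i)
      rw [Finset.sum_sub_distrib, ← Finset.mul_sum, Finset.sum_const, Finset.card_univ,
        nsmul_eq_mul, hΩ, mul_one, ← Nat.cast_sum]
      have h4 := avg_count (R := R) ((F i).filter (fun c => ∀ m, c m ∉ Z))
        (fun c hc => hFinj i c (Finset.mem_filter.1 hc).1)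
      have h5 : ((∑ ω, (S ω i).card : ℕ) : ℝ) * (N : ℝ) ^ N
          = (((F i).filter (fun c => ∀ m, c m ∉ Z)).card : ℝ) * (n : ℝ) ^ (N - R.card)
            * (N : ℝ) ^ n := by
        simp only [hS]
        exact_mod_cast h4
      have h6 := hdens i Z (by omega)
      have h7 : κ * ((n : ℝ) ^ N * (N : ℝ) ^ n) * (N : ℝ) ^ N ≤
          1 / 4 * p ^ t * ((∑ ω, (S ω i).card : ℕ) : ℝ) * (N : ℝ) ^ N := by
        rw [mul_assoc (1 / 4 * p ^ t), h5, hκ, ← hτ]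
        have h8 : p ^ t * (n : ℝ) ^ (N - R.card) * c0 / (4 * (N : ℝ) ^ N) *
            ((n : ℝ) ^ N * (N : ℝ) ^ n) * (N : ℝ) ^ N
            = 1 / 4 * p ^ t * ((c0 * (n : ℝ) ^ N) * (n : ℝ) ^ (N - R.card) * (N : ℝ) ^ n) := by
          field_simp
        rw [h8]
        gcongr
      have h9 := le_of_mul_le_mul_right h7 hNN
      linarith
    have h10 : (1 - κ) ^ j * ∑ i, ∑ ω, w i * (1 - 1 / 4 * p ^ t * ((S ω i).card : ℝ)) ≤
        (1 - κ) ^ j * ∑ i, w i * (((n : ℝ) ^ N * (N : ℝ) ^ n) * (1 - κ)) :=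
      mul_le_mul_of_nonneg_left (Finset.sum_le_sum (fun i _ => hper i)) hκj
    rw [← Finset.sum_mul] at h10
    have h11 := hsumω.trans h10
    have h12 : (1 - κ) ^ j * ((∑ i, w i) * (((n : ℝ) ^ N * (N : ℝ) ^ n) * (1 - κ)))
        = ((n : ℝ) ^ N * (N : ℝ) ^ n) * ((1 - κ) ^ (j + 1) * ∑ i, w i) := by
      rw [pow_succ]; ring
    rw [h12] at h11
    exact le_of_mul_le_mul_left h11 hΩpos

end YYsec


/-! ### Counting extensions in the dense hypergraph -/

lemma deg_ext {n ℓ d : ℕ} (hd : 1 ≤ d) {H : Finset (Finset (Fin n))} (hH : H ⊆ kSets n (ℓ + d))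
    {η : ℝ} (S X : Finset (Fin n)) (hS : S.card = ℓ)
    (hdeg : η * (n : ℝ) ^ d ≤ (degOf H S : ℝ)) (hX : (X.card : ℝ) ≤ 2 / 3 * η * n) :
    η / 3 * (n : ℝ) ^ d ≤ ((H.filter (fun e => S ⊆ e ∧ Disjoint (e \ S) X)).card : ℝ) := by
  have h1 : (H.filter (fun e => S ⊆ e)) ⊆ (H.filter (fun e => S ⊆ e ∧ Disjoint (e \ S) X)) ∪
      X.biUnion (fun x => H.filter (fun e => S ⊆ e ∧ x ∈ e \ S)) := by
    intro e he
    obtain ⟨he1, he2⟩ := Finset.mem_filter.1 he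
    by_cases h : Disjoint (e \ S) X
    · exact Finset.mem_union_left _ (Finset.mem_filter.2 ⟨he1, he2, h⟩)
    · obtain ⟨x, hx1, hx2⟩ := Finset.not_disjoint_iff.1 h
      exact Finset.mem_union_right _ (Finset.mem_biUnion.2 ⟨x, hx2,
        Finset.mem_filter.2 ⟨he1, he2, hx1⟩⟩)
  have h2 : ∀ x ∈ X, (H.filter (fun e => S ⊆ e ∧ x ∈ e \ S)).card ≤ n ^ (d - 1) := by
    intro x _
    have h3 : (H.filter (fun e => S ⊆ e ∧ x ∈ e \ S)).card ≤
        ((Finset.univ : Finset (Fin n)).powersetCard (d - 1)).card := by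
      apply Finset.card_le_card_of_injOn (fun e => (e \ S).erase x)
      · intro e he
        obtain ⟨he1, he2, he3⟩ := Finset.mem_filter.1 he
        have hek := (Finset.mem_powersetCard.1 (hH he1)).2
        refine Finset.mem_coe.2 (Finset.mem_powersetCard.2 ⟨Finset.subset_univ _, ?_⟩)
        rw [Finset.card_erase_of_mem he3, Finset.card_sdiff_of_subset he2, hek, hS]
        omega
      · intro e he e' he' heq
        obtain ⟨he1, he2, he3⟩ := Finset.mem_filter.1 he
        obtain ⟨he1', he2', he3'⟩ := Finset.mem_filter.1 he'
        have h5 : e \ S = e' \ S := by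
          rw [← Finset.insert_erase he3, ← Finset.insert_erase he3']
          exact congrArg (insert x) heq
        rw [← Finset.sdiff_union_of_subset he2, ← Finset.sdiff_union_of_subset he2', h5]
    rw [Finset.card_powersetCard, Finset.card_univ, Fintype.card_fin] at h3
    exact h3.trans (Nat.choose_le_pow _ _)
  have h3 := (Finset.card_le_card h1).trans (Finset.card_union_le _ _)
  have h4 := Finset.card_biUnion_le_card_mul X _ _ h2
  have h5 : (degOf H S : ℝ) ≤ ((H.filter (fun e => S ⊆ e ∧ Disjoint (e \ S) X)).card : ℝ)
      + X.card * (n : ℝ) ^ (d - 1) := by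
    have : degOf H S ≤ (H.filter (fun e => S ⊆ e ∧ Disjoint (e \ S) X)).card
      + X.card * n ^ (d - 1) := by
      unfold degOf
      refine le_trans ?_ (h3.trans (Nat.add_le_add_left h4 _))
      exact le_of_eq (by congr)
    exact_mod_cast this
  have h6 : (X.card : ℝ) * (n : ℝ) ^ (d - 1) ≤ 2 / 3 * η * (n : ℝ) ^ d := by
    calc _ ≤ (2 / 3 * η * n) * (n : ℝ) ^ (d - 1) := by gcongr
      _ = 2 / 3 * η * ((n : ℝ) ^ (d - 1) * n) := by ring
      _ = _ := by rw [← pow_succ, Nat.sub_add_cancel hd]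
  linarith

/-- All lists of length `m`. -/
noncomputable def listsOf (n m : ℕ) : Finset (List (Fin n)) :=
  (Finset.univ : Finset (Fin m → Fin n)).image List.ofFn

lemma mem_listsOf {n m : ℕ} {L : List (Fin n)} : L ∈ listsOf n m ↔ L.length = m := by
  unfold listsOf
  constructor
  · intro h
    obtain ⟨c, -, rfl⟩ := Finset.mem_image.1 h
    simp
  · rintro rfl
    exact Finset.mem_image.2 ⟨L.get, Finset.mem_univ _, List.ofFn_get L⟩

lemma card_append_ge {α : Type*} {G : Finset (List α)} {d : ℕ} (hG : ∀ g ∈ G, g.length = d)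
    (P : List α → Finset (List α)) (Q : Finset (List α)) {x y : ℝ} (hx : x ≤ (G.card : ℝ))
    (hy : ∀ g ∈ G, y ≤ ((P g).card : ℝ)) (hy0 : 0 ≤ y)
    (hQ : ∀ g ∈ G, ∀ L ∈ P g, g ++ L ∈ Q) : x * y ≤ (Q.card : ℝ) := by
  have h1 : (G.sigma P).card ≤ Q.card := by
    apply Finset.card_le_card_of_injOn (fun z => z.1 ++ z.2)
    · rintro ⟨g, L⟩ hz
      obtain ⟨hg, hL⟩ := Finset.mem_sigma.1 hz
      exact hQ g hg L hL
    · rintro ⟨g, L⟩ hz ⟨g', L'⟩ hz' heq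
      obtain ⟨hg, hL⟩ := Finset.mem_sigma.1 hz
      obtain ⟨hg', hL'⟩ := Finset.mem_sigma.1 hz'
      obtain ⟨e1, e2⟩ := List.append_inj heq (by rw [hG g hg, hG g' hg'])
      simp only at e1 e2
      subst e1 e2
      rfl
  rw [Finset.card_sigma] at h1
  calc x * y ≤ G.card * y := by gcongr
    _ = ∑ g ∈ G, y := by rw [Finset.sum_const, nsmul_eq_mul]
    _ ≤ ∑ g ∈ G, ((P g).card : ℝ) := Finset.sum_le_sum hy
    _ ≤ Q.card := by exact_mod_cast h1

/-- Free lists avoiding `X`. -/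
noncomputable def freeL (n m : ℕ) (X : Finset (Fin n)) : Finset (List (Fin n)) :=
  (listsOf n m).filter (fun L => L.Nodup ∧ ∀ x ∈ L, x ∉ X)

lemma card_freeL {n : ℕ} (m : ℕ) : ∀ (X : Finset (Fin n)), ((X.card : ℝ) + m ≤ 2 / 3 * n) →
    ((n : ℝ) / 3) ^ m ≤ ((freeL n m X).card : ℝ) := by
  induction m with
  | zero =>
    intro X _
    have : ([] : List (Fin n)) ∈ freeL n 0 X := by
      simp [freeL, mem_listsOf]
    have h1 : 1 ≤ (freeL n 0 X).card := Finset.card_pos.2 ⟨_, this⟩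
    simpa using h1
  | succ m ih =>
    intro X hX
    push_cast at hX
    rw [pow_succ']
    apply card_append_ge (G := (Finset.univ \ X).image (fun v => [v])) (d := 1)
      (P := fun g => freeL n m (X ∪ g.toFinset))
    · intro g hg
      obtain ⟨v, -, rfl⟩ := Finset.mem_image.1 hg
      rfl
    · rw [Finset.card_image_of_injective _ (fun a b h => by simpa using h)]
      rw [Finset.card_sdiff_of_subset (Finset.subset_univ _), Finset.card_univ, Fintype.card_fin,
        Nat.cast_sub (by simpa using Finset.card_le_univ X)]
      have : (0 : ℝ) ≤ m := by positivity
      linarith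
    · intro g hg
      obtain ⟨v, -, rfl⟩ := Finset.mem_image.1 hg
      apply ih
      have h1 : (X ∪ [v].toFinset).card ≤ X.card + 1 := by
        refine (Finset.card_union_le _ _).trans ?_
        simp
      have h2 : ((X ∪ [v].toFinset).card : ℝ) ≤ X.card + 1 := by exact_mod_cast h1
      linarith
    · positivity
    · intro g hg L hL
      obtain ⟨v, hv, rfl⟩ := Finset.mem_image.1 hg
      simp only [Finset.mem_sdiff, Finset.mem_univ, true_and] at hv
      obtain ⟨h1, h2, h3⟩ := Finset.mem_filter.1 hL
      rw [mem_listsOf] at h1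
      refine Finset.mem_filter.2 ⟨?_, ?_, ?_⟩
      · rw [mem_listsOf]; simp [h1]
      · simp only [List.singleton_append, List.nodup_cons]
        refine ⟨fun h => h3 v h ?_, h2⟩
        simp
      · intro x hx
        simp only [List.singleton_append, List.mem_cons] at hx
        rcases hx with rfl | hx
        · exact hv
        · intro hxX
          exact h3 x hx (Finset.mem_union_left _ hxX)

/-- One-edge extensions. -/
noncomputable def extL {n : ℕ} (H : Finset (Finset (Fin n))) (d : ℕ) (S X : Finset (Fin n)) :
    Finset (List (Fin n)) :=
  (listsOf n d).filter (fun g => g.Nodup ∧ (∀ x ∈ g, x ∉ X ∧ x ∉ S) ∧ S ∪ g.toFinset ∈ H)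

lemma card_extL {n ℓ d : ℕ} (hd : 1 ≤ d) {H : Finset (Finset (Fin n))}
    (hH : H ⊆ kSets n (ℓ + d))
    {η : ℝ} (S X : Finset (Fin n)) (hS : S.card = ℓ)
    (hdeg : η * (n : ℝ) ^ d ≤ (degOf H S : ℝ)) (hX : (X.card : ℝ) ≤ 2 / 3 * η * n) :
    η / 3 * (n : ℝ) ^ d ≤ ((extL H d S X).card : ℝ) := by
  refine (deg_ext hd hH S X hS hdeg hX).trans ?_
  apply Nat.cast_le.2
  apply Finset.card_le_card_of_injOn (fun e => (e \ S).toList)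
  · intro e he
    obtain ⟨he1, he2, he3⟩ := Finset.mem_filter.1 he
    have hek := (Finset.mem_powersetCard.1 (hH he1)).2
    refine Finset.mem_coe.2 (Finset.mem_filter.2 ⟨?_, Finset.nodup_toList _, ?_, ?_⟩)
    · rw [mem_listsOf, Finset.length_toList, Finset.card_sdiff_of_subset he2, hek, hS]
      omega
    · intro x hx
      rw [Finset.mem_toList] at hx
      exact ⟨Finset.disjoint_left.1 he3 hx, (Finset.mem_sdiff.1 hx).2⟩
    · rw [Finset.toList_toFinset, Finset.union_sdiff_of_subset he2]
      exact he1
  · intro e he e' he' heq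
    obtain ⟨he1, he2, he3⟩ := Finset.mem_filter.1 he
    obtain ⟨he1', he2', he3'⟩ := Finset.mem_filter.1 he'
    have h5 := congrArg List.toFinset heq
    simp only [Finset.toList_toFinset] at h5
    rw [← Finset.sdiff_union_of_subset he2, ← Finset.sdiff_union_of_subset he2', h5]

/-- Path extensions by `t` edges. -/
noncomputable def pathL {n : ℕ} (H : Finset (Finset (Fin n))) (ℓ d t : ℕ) (S : List (Fin n))
    (X : Finset (Fin n)) : Finset (List (Fin n)) :=
  (listsOf n (t * d)).filter (fun L => L.Nodup ∧ (∀ x ∈ L, x ∉ X ∧ x ∉ S) ∧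
    ∀ i < t, (((S ++ L).drop (i * d)).take (ℓ + d)).toFinset ∈ H)

lemma card_pathL {n ℓ d : ℕ} (hd : 1 ≤ d) {H : Finset (Finset (Fin n))}
    (hH : H ⊆ kSets n (ℓ + d)) {η : ℝ} (hη : 0 < η)
    (hdich : ∀ S : Finset (Fin n), S.card = ℓ →
        degOf H S = 0 ∨ η * (n : ℝ) ^ d ≤ (degOf H S : ℝ)) (t : ℕ) :
    ∀ (S : List (Fin n)) (X : Finset (Fin n)), S.Nodup → S.length = ℓ →
      η * (n : ℝ) ^ d ≤ (degOf H S.toFinset : ℝ) →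
      (X.card : ℝ) + t * (ℓ + d) ≤ 2 / 3 * η * n →
      (η / 3 * (n : ℝ) ^ d) ^ t ≤ ((pathL H ℓ d t S X).card : ℝ) := by
  induction t with
  | zero =>
    intro S X _ _ _ _
    have : ([] : List (Fin n)) ∈ pathL H ℓ d 0 S X := by
      simp [pathL, mem_listsOf]
    have h1 : 1 ≤ (pathL H ℓ d 0 S X).card := Finset.card_pos.2 ⟨_, this⟩
    simpa using h1
  | succ t ih =>
    intro S X hSn hSl hdeg hX
    push_cast at hX
    rw [pow_succ']
    have ht0 : (0 : ℝ) ≤ t * (ℓ + d) := by positivity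
    have hld0 : (0 : ℝ) ≤ (ℓ : ℝ) + d := by positivity
    apply card_append_ge (G := extL H d S.toFinset X) (d := d)
      (P := fun g => pathL H ℓ d t ((S ++ g).drop d) (X ∪ (S.toFinset ∪ g.toFinset)))
    · intro g hg
      exact mem_listsOf.1 (Finset.mem_filter.1 hg).1
    · exact card_extL hd hH _ _ (by rw [List.toFinset_card_of_nodup hSn, hSl]) hdeg (by linarith)
    · intro g hg
      obtain ⟨h1, h2, h3, h4⟩ := Finset.mem_filter.1 hg
      rw [mem_listsOf] at h1
      have hnd : (S ++ g).Nodup := by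
        rw [List.nodup_append']
        refine ⟨hSn, h2, ?_⟩
        intro x hx hxg
        exact (h3 x hxg).2 (List.mem_toFinset.2 hx)
      have hnd' : ((S ++ g).drop d).Nodup := (List.drop_sublist d (S ++ g)).nodup hnd
      have hlen : ((S ++ g).drop d).length = ℓ := by simp [h1, hSl]
      apply ih _ _ hnd' hlen
      · rcases hdich ((S ++ g).drop d).toFinset (by
          rw [List.toFinset_card_of_nodup hnd', hlen]) with h | h
        · exfalso
          unfold degOf at h
          rw [Finset.card_eq_zero, Finset.filter_eq_empty_iff] at h
          apply h h4
          intro x hx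
          rw [← List.toFinset_append]
          exact List.mem_toFinset.2 (List.mem_of_mem_drop (List.mem_toFinset.1 hx))
        · exact h
      · have h5 : (X ∪ (S.toFinset ∪ g.toFinset)).card ≤ X.card + (ℓ + d) := by
          refine (Finset.card_union_le _ _).trans (Nat.add_le_add_left ?_ _)
          refine (Finset.card_union_le _ _).trans (Nat.add_le_add ?_ ?_)
          · rw [← hSl]; exact List.toFinset_card_le _
          · rw [← h1]; exact List.toFinset_card_le _
        have h6 : ((X ∪ (S.toFinset ∪ g.toFinset)).card : ℝ) ≤ X.card + (ℓ + d) := by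
          exact_mod_cast h5
        linarith
    · positivity
    · intro g hg L hL
      obtain ⟨h1, h2, h3, h4⟩ := Finset.mem_filter.1 hg
      obtain ⟨k1, k2, k3, k4⟩ := Finset.mem_filter.1 hL
      rw [mem_listsOf] at h1 k1
      refine Finset.mem_filter.2 ⟨?_, ?_, ?_, ?_⟩
      · rw [mem_listsOf, List.length_append, h1, k1]; ring
      · rw [List.nodup_append']
        refine ⟨h2, k2, ?_⟩
        intro x hxg hxL
        apply (k3 x hxL).1
        simp [hxg]
      · intro x hx
        rcases List.mem_append.1 hx with hx | hx
        · exact ⟨(h3 x hx).1, fun h => (h3 x hx).2 (List.mem_toFinset.2 h)⟩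
        · have := (k3 x hx).1
          simp only [Finset.mem_union, List.mem_toFinset, not_or] at this
          exact ⟨this.1, this.2.1⟩
      · intro i hi
        rw [← List.append_assoc]
        rcases i with _ | i
        · have : ((S ++ g ++ L).drop (0 * d)).take (ℓ + d) = S ++ g := by
            rw [zero_mul, List.drop_zero]
            apply List.take_left'
            simp [hSl, h1]
          rw [this, List.toFinset_append]
          exact h4
        · have : (S ++ g ++ L).drop ((i + 1) * d) = ((S ++ g).drop d ++ L).drop (i * d) := by
            have e : (i + 1) * d = d + i * d := by ring
            rw [e, ← List.drop_drop, List.drop_append_of_le_length (by simp [h1])]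
          rw [this]
          exact k4 i (by omega)

lemma window_reverse {α : Type*} [DecidableEq α] (M : List α) {a b k : ℕ} (h : a + k + b = M.length) :
    ((M.reverse.drop a).take k).toFinset = ((M.drop b).take k).toFinset := by
  ext x
  simp only [List.mem_toFinset]
  have e1 : (M.reverse.drop a).take k = ((M.drop b).take k).reverse := by
    rw [List.drop_reverse, List.take_reverse, List.drop_take, List.length_take]
    congr 1
    have h1 : min (M.length - a) M.length - k = b := by omega
    have h2 : M.length - a - b = k := by omega
    rw [h1, h2]
  rw [e1, List.mem_reverse]


/-- The good middle lists. -/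
noncomputable def midL {n : ℕ} (H : Finset (Finset (Fin n))) (ℓ d t N : ℕ) (A B : List (Fin n))
    (Z : Finset (Fin n)) : Finset (List (Fin n)) :=
  (listsOf n N).filter (fun C => (A ++ C ++ B).Nodup ∧ (∀ x ∈ C, x ∉ Z) ∧
    (∀ i < t, (((A ++ C ++ B).drop (i * d)).take (ℓ + d)).toFinset ∈ H) ∧
    ∀ i < t, (((A ++ C ++ B).drop ((2 * t + i) * d)).take (ℓ + d)).toFinset ∈ H)

lemma card_midL {n ℓ d t N : ℕ} (hd : 1 ≤ d) (hlt : ℓ ≤ t * d) (hN : N = 3 * t * d - ℓ)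
    {H : Finset (Finset (Fin n))}
    (hH : H ⊆ kSets n (ℓ + d)) {η : ℝ} (hη : 0 < η) (hη1 : η ≤ 1)
    (hdich : ∀ S : Finset (Fin n), S.card = ℓ →
        degOf H S = 0 ∨ η * (n : ℝ) ^ d ≤ (degOf H S : ℝ))
    (A B : List (Fin n)) (hAn : A.Nodup) (hBn : B.Nodup) (hAl : A.length = ℓ) (hBl : B.length = ℓ)
    (hAB : ∀ x ∈ A, x ∉ B)
    (hAd : η * (n : ℝ) ^ d ≤ (degOf H A.toFinset : ℝ))
    (hBd : η * (n : ℝ) ^ d ≤ (degOf H B.toFinset : ℝ))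
    (Z : Finset (Fin n)) (hZ : (Z.card : ℝ) + (2 * ℓ + N + t * (ℓ + d) : ℝ) ≤ 2 / 3 * η * n) :
    (η / 3 * (n : ℝ) ^ d) ^ t * (((n : ℝ) / 3) ^ (t * d - ℓ) * (η / 3 * (n : ℝ) ^ d) ^ t) ≤
      ((midL H ℓ d t N A B Z).card : ℝ) := by
  have hNl : t * d + ((t * d - ℓ) + t * d) = N := by
    rw [hN]
    have : 3 * t * d = 3 * (t * d) := by ring
    omega
  have hηn : 2 / 3 * η * n ≤ 2 / 3 * (n : ℝ) := by
    have : η * (n : ℝ) ≤ 1 * n := by gcongr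
    linarith
  have htk : (0 : ℝ) ≤ t * (ℓ + d) := by positivity
  have hNr : (N : ℝ) = t * d + ((t * d - ℓ : ℕ) + t * d) := by exact_mod_cast hNl.symm
  have hl0 : (0 : ℝ) ≤ ℓ := by positivity
  have htd0 : (0 : ℝ) ≤ t * d := by positivity
  have ht20 : (0 : ℝ) ≤ (t * d - ℓ : ℕ) := by positivity
  have hAc : A.toFinset.card = ℓ := by rw [List.toFinset_card_of_nodup hAn, hAl]
  have hBc : B.toFinset.card = ℓ := by rw [List.toFinset_card_of_nodup hBn, hBl]
  apply card_append_ge (G := pathL H ℓ d t A (Z ∪ B.toFinset)) (d := t * d)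
    (P := fun L1 => (listsOf n ((t * d - ℓ) + t * d)).filter
      (fun L => L1 ++ L ∈ midL H ℓ d t N A B Z))
  · intro g hg
    exact mem_listsOf.1 (Finset.mem_filter.1 hg).1
  · apply card_pathL hd hH hη hdich t A _ hAn hAl hAd
    have h1 : ((Z ∪ B.toFinset).card : ℝ) ≤ Z.card + ℓ := by
      have := Finset.card_union_le Z B.toFinset
      rw [hBc] at this
      exact_mod_cast this
    linarith
  · intro L1 hL1
    obtain ⟨p1, p2, p3, p4⟩ := Finset.mem_filter.1 hL1
    rw [mem_listsOf] at p1
    have hL1c : L1.toFinset.card = t * d := by rw [List.toFinset_card_of_nodup p2, p1]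
    apply card_append_ge (G := freeL n (t * d - ℓ)
        (Z ∪ (A.toFinset ∪ (B.toFinset ∪ L1.toFinset)))) (d := t * d - ℓ)
      (P := fun f => (pathL H ℓ d t B.reverse
        (Z ∪ (A.toFinset ∪ (L1.toFinset ∪ f.toFinset)))).image List.reverse)
    · intro g hg
      exact mem_listsOf.1 (Finset.mem_filter.1 hg).1
    · apply card_freeL
      have h1 : (Z ∪ (A.toFinset ∪ (B.toFinset ∪ L1.toFinset))).card
          ≤ Z.card + (ℓ + (ℓ + t * d)) := by
        refine (Finset.card_union_le _ _).trans (Nat.add_le_add_left ?_ _)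
        refine (Finset.card_union_le _ _).trans (Nat.add_le_add hAc.le ?_)
        exact (Finset.card_union_le _ _).trans (Nat.add_le_add hBc.le hL1c.le)
      have h2 : ((Z ∪ (A.toFinset ∪ (B.toFinset ∪ L1.toFinset))).card : ℝ)
          ≤ Z.card + (ℓ + (ℓ + t * d)) := by exact_mod_cast h1
      linarith
    · intro f hf
      obtain ⟨f1, f2, f3⟩ := Finset.mem_filter.1 hf
      rw [mem_listsOf] at f1
      have hfc : f.toFinset.card = t * d - ℓ := by rw [List.toFinset_card_of_nodup f2, f1]
      rw [Finset.card_image_of_injective _ List.reverse_injective]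
      apply card_pathL hd hH hη hdich t _ _ (List.nodup_reverse.2 hBn) (by simp [hBl])
        (by rw [List.toFinset_reverse]; exact hBd)
      have h1 : (Z ∪ (A.toFinset ∪ (L1.toFinset ∪ f.toFinset))).card
          ≤ Z.card + (ℓ + (t * d + (t * d - ℓ))) := by
        refine (Finset.card_union_le _ _).trans (Nat.add_le_add_left ?_ _)
        refine (Finset.card_union_le _ _).trans (Nat.add_le_add hAc.le ?_)
        exact (Finset.card_union_le _ _).trans (Nat.add_le_add hL1c.le hfc.le)
      have h2 : ((Z ∪ (A.toFinset ∪ (L1.toFinset ∪ f.toFinset))).card : ℝ)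
          ≤ Z.card + (ℓ + (t * d + (t * d - ℓ : ℕ))) := by exact_mod_cast h1
      linarith
    · positivity
    · intro f hf L2r hL2r
      obtain ⟨L2, hL2, rfl⟩ := Finset.mem_image.1 hL2r
      obtain ⟨f1, f2, f3⟩ := Finset.mem_filter.1 hf
      obtain ⟨k1, k2, k3, k4⟩ := Finset.mem_filter.1 hL2
      rw [mem_listsOf] at f1 k1
      simp only [Finset.mem_union, List.mem_toFinset, not_or, List.mem_reverse] at f3 k3 p3
      refine Finset.mem_filter.2 ⟨?_, Finset.mem_filter.2 ⟨?_, ?_, ?_, ?_, ?_⟩⟩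
      · rw [mem_listsOf]; simp [f1, k1]
      · rw [mem_listsOf]; simp [f1, k1, p1, ← hNl]
      · simp only [List.nodup_append', List.nodup_reverse, List.disjoint_append_left,
          List.disjoint_append_right]
        simp only [List.Disjoint, List.mem_reverse]
        have q3 : ∀ x ∈ L1, (x ∉ Z ∧ x ∉ B) ∧ x ∉ A := p3
        have r3 : ∀ x ∈ f, x ∉ Z ∧ x ∉ A ∧ x ∉ B ∧ x ∉ L1 := f3
        have s3 : ∀ x ∈ L2, (x ∉ Z ∧ x ∉ A ∧ x ∉ L1 ∧ x ∉ f) ∧ x ∉ B := k3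
        grind
      · intro x hx
        simp only [List.mem_append, List.mem_reverse] at hx
        rcases hx with hx | hx | hx
        · exact (p3 x hx).1.1
        · exact (f3 x hx).1
        · exact (k3 x hx).1.1
      · intro i hi
        have e : A ++ (L1 ++ (f ++ L2.reverse)) ++ B = (A ++ L1) ++ (f ++ L2.reverse ++ B) := by
          simp only [List.append_assoc]
        have hmul : i * d + d ≤ t * d := by
          have := Nat.mul_le_mul_right d (show i + 1 ≤ t from hi)
          linarith
        rw [e, List.drop_append_of_le_length (by simp [hAl, p1]; omega),
          List.take_append_of_le_length (by simp [hAl, p1]; omega)]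
        exact p4 i hi
      · intro i hi
        have e : A ++ (L1 ++ (f ++ L2.reverse)) ++ B = (A ++ L1 ++ f) ++ (B.reverse ++ L2).reverse := by
          simp only [List.append_assoc, List.reverse_append, List.reverse_reverse]
        have hl : (A ++ L1 ++ f).length = 2 * t * d := by
          simp only [List.length_append, hAl, p1, f1]
          have : 2 * t * d = 2 * (t * d) := by ring
          omega
        have e2 : (2 * t + i) * d = (A ++ L1 ++ f).length + i * d := by rw [hl]; ring
        rw [e, e2, ← List.drop_drop, List.drop_left]
        have h5 : (t - 1 - i) * d + i * d + d = t * d := by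
          rw [← add_mul, ← Nat.succ_mul]
          congr 1
          omega
        rw [window_reverse (B.reverse ++ L2) (a := i * d) (b := (t - 1 - i) * d) (k := ℓ + d) (by
          simp only [List.length_append, List.length_reverse, hBl, k1]; omega)]
        exact k4 (t - 1 - i) (by omega)
  · positivity
  · intro g hg L hL
    exact (Finset.mem_filter.1 hL).2

/-! ### From lists to tuples -/

/-- The vertex set of the `i`-th edge. -/
noncomputable def edgeSet {n b : ℕ} (k d i : ℕ) (w : Fin b → Fin n) : Finset (Fin n) :=
  (Finset.univ.filter (fun m : Fin b => (m : ℕ) ∈ edgeIdx k d 0 i)).image w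

lemma edgeSet_eq {n b : ℕ} (k d i : ℕ) (w : Fin b → Fin n) :
    edgeSet k d i w = (((List.ofFn w).drop (i * d)).take k).toFinset := by
  ext x
  simp only [edgeSet, edgeIdx, Finset.mem_image, Finset.mem_filter, Finset.mem_univ, true_and,
    Finset.mem_range, List.mem_toFinset, List.mem_iff_getElem, List.getElem_take,
    List.getElem_drop, List.getElem_ofFn, List.length_take, List.length_drop, List.length_ofFn]
  constructor
  · rintro ⟨m, ⟨j, hj, hm⟩, rfl⟩
    have := m.isLt
    refine ⟨j, by omega, ?_⟩
    congr 1
    ext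
    simp only
    omega
  · rintro ⟨j, hj, rfl⟩
    exact ⟨_, ⟨j, by omega, by simp⟩, rfl⟩

lemma ofFn_concat3 {n p q r : ℕ} (A : Fin p → Fin n) (C : Fin q → Fin n) (B : Fin r → Fin n) :
    List.ofFn (concat3 A C B) = List.ofFn A ++ List.ofFn C ++ List.ofFn B := by
  apply List.ext_getElem
  · simp [Nat.add_assoc]
  · intro i h1 h2
    simp only [List.getElem_ofFn, concat3, List.getElem_append, List.length_append,
      List.length_ofFn]
    split_ifs <;> first | rfl | omega

/-- The good tuples for the pair `A`, `B`. -/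
noncomputable def Fset {n ℓ : ℕ} (H : Finset (Finset (Fin n))) (d t N : ℕ) (A B : Fin ℓ → Fin n) :
    Finset (Fin N → Fin n) :=
  Finset.univ.filter (fun c => Function.Injective (concat3 A c B) ∧
    (∀ i < t, edgeSet (ℓ + d) d i (concat3 A c B) ∈ H) ∧
    ∀ i < t, edgeSet (ℓ + d) d (2 * t + i) (concat3 A c B) ∈ H)

lemma toFinset_ofFn {n ℓ : ℕ} (A : Fin ℓ → Fin n) :
    (List.ofFn A).toFinset = Finset.image A Finset.univ := by
  ext x
  simp [List.mem_ofFn]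

lemma card_Fset {n ℓ d t N : ℕ} (hd : 1 ≤ d) (hlt : ℓ ≤ t * d) (hN : N = 3 * t * d - ℓ)
    {H : Finset (Finset (Fin n))}
    (hH : H ⊆ kSets n (ℓ + d)) {η : ℝ} (hη : 0 < η) (hη1 : η ≤ 1)
    (hdich : ∀ S : Finset (Fin n), S.card = ℓ →
        degOf H S = 0 ∨ η * (n : ℝ) ^ d ≤ (degOf H S : ℝ))
    (A B : Fin ℓ → Fin n) (hA : Function.Injective A) (hB : Function.Injective B)
    (hAB : ∀ m m', A m ≠ B m')
    (hAd : η * (n : ℝ) ^ d ≤ (degOf H (Finset.image A Finset.univ) : ℝ))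
    (hBd : η * (n : ℝ) ^ d ≤ (degOf H (Finset.image B Finset.univ) : ℝ))
    (Z : Finset (Fin n)) (hZ : (Z.card : ℝ) + (2 * ℓ + N + t * (ℓ + d) : ℝ) ≤ 2 / 3 * η * n) :
    ((η / 3) ^ (2 * t) * (1 / 3) ^ (t * d - ℓ)) * (n : ℝ) ^ N ≤
      (((Fset H d t N A B).filter (fun c => ∀ m, c m ∉ Z)).card : ℝ) := by
  have h1 := card_midL hd hlt hN hH hη hη1 hdich (List.ofFn A) (List.ofFn B)
    (List.nodup_ofFn.2 hA) (List.nodup_ofFn.2 hB) (by simp) (by simp) (by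
      intro x hx hx'
      rw [List.mem_ofFn] at hx hx'
      obtain ⟨m, rfl⟩ := hx
      obtain ⟨m', h⟩ := hx'
      exact hAB m m' h.symm) (by rw [toFinset_ofFn]; exact hAd) (by rw [toFinset_ofFn]; exact hBd)
    Z hZ
  have h2 : midL H ℓ d t N (List.ofFn A) (List.ofFn B) Z ⊆
      ((Fset H d t N A B).filter (fun c => ∀ m, c m ∉ Z)).image List.ofFn := by
    intro C hC
    obtain ⟨c1, c2, c3, c4, c5⟩ := Finset.mem_filter.1 hC
    rw [listsOf] at c1
    obtain ⟨c, -, rfl⟩ := Finset.mem_image.1 c1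
    refine Finset.mem_image.2 ⟨c, Finset.mem_filter.2 ⟨Finset.mem_filter.2
      ⟨Finset.mem_univ _, ?_, ?_, ?_⟩, ?_⟩, rfl⟩
    · rw [← List.nodup_ofFn, ofFn_concat3]; exact c2
    · intro i hi
      rw [edgeSet_eq, ofFn_concat3]
      exact c4 i hi
    · intro i hi
      rw [edgeSet_eq, ofFn_concat3]
      exact c5 i hi
    · intro m
      exact c3 _ (List.mem_ofFn.2 ⟨m, rfl⟩)
  have h3 := (Finset.card_le_card h2).trans Finset.card_image_le
  have h4 : (n : ℝ) ^ N = ((n : ℝ) ^ d) ^ t * ((n : ℝ) ^ (t * d - ℓ) * ((n : ℝ) ^ d) ^ t) := by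
    rw [← pow_mul, ← pow_add, ← pow_add]
    congr 1
    rw [hN]
    have : 3 * t * d = 3 * (t * d) := by ring
    have : d * t = t * d := by ring
    omega
  calc _ = (η / 3 * (n : ℝ) ^ d) ^ t * (((n : ℝ) / 3) ^ (t * d - ℓ) * (η / 3 * (n : ℝ) ^ d) ^ t)
        := by
        rw [h4, two_mul, pow_add, mul_pow, div_eq_mul_one_div (n : ℝ) 3, mul_pow (n : ℝ)]; ring
    _ ≤ _ := h1
    _ ≤ _ := by exact_mod_cast h3


/-- The windows of the middle edges in the connecting tuple. -/
def winS (ℓ d t N : ℕ) (x : Fin t) : Finset (Fin N) :=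
  Finset.univ.filter (fun m => (t + x) * d - ℓ ≤ (m : ℕ) ∧ (m : ℕ) < (t + x) * d + d)

/-- The positions outside of the middle part, together with the anchor. -/
def RS (ℓ d t N : ℕ) : Finset (Fin N) :=
  Finset.univ.filter (fun m => (m : ℕ) < t * d - ℓ ∨ 2 * (t * d) ≤ (m : ℕ) ∨
    (m : ℕ) = t * d + (t - 1) * d - ℓ)

section winsec
variable {ℓ d t N : ℕ}

lemma card_filter_interval (N a b : ℕ) (hb : b ≤ N) :
    (Finset.univ.filter (fun m : Fin N => a ≤ (m : ℕ) ∧ (m : ℕ) < b)).card = b - a := by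
  have : (Finset.univ.filter (fun m : Fin N => a ≤ (m : ℕ) ∧ (m : ℕ) < b)).map Fin.valEmbedding
      = Finset.Ico a b := by
    ext x
    simp only [Finset.mem_map, Finset.mem_filter, Finset.mem_univ, true_and, Finset.mem_Ico,
      Fin.valEmbedding_apply]
    constructor
    · rintro ⟨m, h, rfl⟩; exact h
    · rintro h; exact ⟨⟨x, by omega⟩, h, rfl⟩
  rw [← Finset.card_map, this, Nat.card_Ico]

lemma fin_mul_le (x : Fin t) : (x : ℕ) * d + d ≤ t * d := by
  have := Nat.mul_le_mul_right d (show (x : ℕ) + 1 ≤ t from x.isLt)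
  linarith

lemma card_winS (hlt : ℓ ≤ t * d) (hN : N = 3 * (t * d) - ℓ) (x : Fin t) :
    (winS ℓ d t N x).card = ℓ + d := by
  have h := fin_mul_le (d := d) x
  have e : (t + x) * d = t * d + x * d := by ring
  unfold winS
  rw [card_filter_interval _ _ _ (by omega)]
  omega

lemma winS_inj (hd : 1 ≤ d) (hlt : ℓ ≤ t * d) (hN : N = 3 * (t * d) - ℓ) :
    Function.Injective (winS ℓ d t N) := by
  have key : ∀ x y : Fin t, winS ℓ d t N x = winS ℓ d t N y → (x : ℕ) * d ≤ y * d := by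
    intro x y h
    have h1 := fin_mul_le (d := d) x
    have e : (t + x) * d = t * d + x * d := by ring
    have e' : (t + y) * d = t * d + y * d := by ring
    have hm : (⟨(t + x) * d + d - 1, by omega⟩ : Fin N) ∈ winS ℓ d t N x :=
      Finset.mem_filter.2 ⟨Finset.mem_univ _, by simp only; omega⟩
    rw [h] at hm
    have := (Finset.mem_filter.1 hm).2
    simp only at this
    omega
  intro x y h
  have h1 := le_antisymm (key x y h) (key y x h.symm)
  exact Fin.ext (Nat.eq_of_mul_eq_mul_right hd h1)

lemma win_anchor (hd : 1 ≤ d) (hlt : ℓ ≤ t * d) (hlt2 : (t - 1) * d < ℓ)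
    (hN : N = 3 * (t * d) - ℓ) (q0 : Fin N) (hq : (q0 : ℕ) = t * d + (t - 1) * d - ℓ)
    (x : Fin t) : q0 ∈ winS ℓ d t N x := by
  have h := fin_mul_le (d := d) x
  have e : (t + x) * d = t * d + x * d := by ring
  have h2 : (x : ℕ) * d ≤ (t - 1) * d := Nat.mul_le_mul_right d (by have := x.isLt; omega)
  refine Finset.mem_filter.2 ⟨Finset.mem_univ _, ?_⟩
  omega

lemma win_cover (hd : 1 ≤ d) (hlt : ℓ ≤ t * d) (hN : N = 3 * (t * d) - ℓ) :
    RS ℓ d t N ∪ Finset.univ.biUnion (winS ℓ d t N) = Finset.univ := by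
  ext m
  simp only [Finset.mem_union, Finset.mem_univ, iff_true, Finset.mem_biUnion, true_and]
  by_cases h : m ∈ RS ℓ d t N
  · exact Or.inl h
  right
  simp only [RS, Finset.mem_filter, Finset.mem_univ, true_and, not_or, not_lt, not_le] at h
  have ht : 0 < t := by
    rcases Nat.eq_zero_or_pos t with h0 | h0
    · subst h0; omega
    · exact h0
  by_cases hm : (m : ℕ) < t * d
  · refine ⟨⟨0, ht⟩, Finset.mem_filter.2 ⟨Finset.mem_univ _, ?_⟩⟩
    simp only [add_zero]
    omega
  · have h1 : ((m : ℕ) - t * d) / d < t := by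
      rw [Nat.div_lt_iff_lt_mul hd]; omega
    refine ⟨⟨((m : ℕ) - t * d) / d, h1⟩, Finset.mem_filter.2 ⟨Finset.mem_univ _, ?_⟩⟩
    simp only
    have e := add_mul t (((m : ℕ) - t * d) / d) d
    have h2 := Nat.div_add_mod ((m : ℕ) - t * d) d
    have h3 := Nat.mod_lt ((m : ℕ) - t * d) hd
    rw [mul_comm d] at h2
    omega

lemma card_RS (hd : 1 ≤ d) (hlt : ℓ ≤ t * d) (hlt2 : (t - 1) * d < ℓ) (ht : 1 ≤ t)
    (hN : N = 3 * (t * d) - ℓ) : N - (RS ℓ d t N).card = t * d + ℓ - 1 := by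
  have hq : t * d + (t - 1) * d - ℓ < N := by omega
  have htd : (t - 1) * d + d = t * d := by
    rw [← Nat.succ_mul]; congr 1; omega
  have h1 : N - (RS ℓ d t N).card = ((RS ℓ d t N)ᶜ).card := by
    rw [Finset.card_compl, Fintype.card_fin]
  have h2 : (RS ℓ d t N)ᶜ = (Finset.univ.filter (fun m : Fin N => t * d - ℓ ≤ (m : ℕ) ∧
      (m : ℕ) < 2 * (t * d))).erase ⟨_, hq⟩ := by
    ext m
    simp only [RS, Finset.mem_compl, Finset.mem_filter, Finset.mem_univ, true_and,
      Finset.mem_erase, ne_eq, Fin.ext_iff]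
    omega
  rw [h1, h2, Finset.card_erase_of_mem, card_filter_interval _ _ _ (by omega)]
  · omega
  · refine Finset.mem_filter.2 ⟨Finset.mem_univ _, ?_⟩
    simp only
    omega

lemma card_compl_win (hd : 1 ≤ d) (hlt : ℓ ≤ t * d)
    (hN : N = 3 * (t * d) - ℓ) (I : Finset (Fin t)) (hI : I.Nonempty) :
    N - (RS ℓ d t N ∪ I.biUnion (winS ℓ d t N)).card ≤ (t - I.card) * d := by
  have h1 : N - (RS ℓ d t N ∪ I.biUnion (winS ℓ d t N)).card =
      ((RS ℓ d t N ∪ I.biUnion (winS ℓ d t N))ᶜ).card := by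
    rw [Finset.card_compl, Fintype.card_fin]
  have hT : ((Finset.range t \ I.image (fun x : Fin t => (x : ℕ))) ×ˢ Finset.range d).card
      = (t - I.card) * d := by
    rw [Finset.card_product, Finset.card_range, Finset.card_sdiff_of_subset, Finset.card_range,
      Finset.card_image_of_injective _ Fin.val_injective]
    intro x hx
    obtain ⟨y, -, rfl⟩ := Finset.mem_image.1 hx
    exact Finset.mem_range.2 y.isLt
  rw [h1, ← hT]
  set Mx := I.max' hI with hMx
  have hMI : Mx ∈ I := Finset.max'_mem _ _
  have hMt := fin_mul_le (d := d) Mx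
  set y : Fin N → ℕ := fun m =>
    if (m : ℕ) - (t * d - ℓ) < Mx * d + d then (m : ℕ) - (t * d - ℓ)
      else (m : ℕ) - (t * d - ℓ) - ℓ with hy
  have hmem : ∀ m ∈ (RS ℓ d t N ∪ I.biUnion (winS ℓ d t N))ᶜ,
      t * d - ℓ ≤ (m : ℕ) ∧ (m : ℕ) < 2 * (t * d) ∧
      ∀ x ∈ I, (m : ℕ) - (t * d - ℓ) < x * d ∨ x * d + ℓ + d ≤ (m : ℕ) - (t * d - ℓ) := by
    intro m hm
    simp only [Finset.mem_compl, Finset.mem_union, not_or, RS, Finset.mem_filter,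
      Finset.mem_univ, true_and, Finset.mem_biUnion, not_exists, not_and, winS] at hm
    refine ⟨by omega, by omega, fun x hx => ?_⟩
    have h2 := hm.2 x hx
    have e : (t + x) * d = t * d + x * d := by ring
    omega
  apply Finset.card_le_card_of_injOn (fun m => (y m / d, y m % d))
  · intro m hm
    obtain ⟨a1, a2, a3⟩ := hmem m hm
    have a4 := a3 Mx hMI
    refine Finset.mem_coe.2 (Finset.mem_product.2 ⟨Finset.mem_sdiff.2 ⟨?_, ?_⟩, ?_⟩)
    · simp only [Finset.mem_range]
      rw [Nat.div_lt_iff_lt_mul hd]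
      simp only [hy]
      split_ifs <;> omega
    · intro hx
      obtain ⟨x, hxI, hx⟩ := Finset.mem_image.1 hx
      simp only at hx
      have h2 := Nat.div_add_mod (y m) d
      have h3 := Nat.mod_lt (y m) hd
      rw [← hx, mul_comm d] at h2
      have a5 := a3 x hxI
      have h4 : (x : ℕ) * d ≤ Mx * d := Nat.mul_le_mul_right d (Finset.le_max' I x hxI)
      simp only [hy] at h2 h3
      split_ifs at h2 h3 <;> omega
    · simp only [Finset.mem_range]
      exact Nat.mod_lt _ hd
  · intro m hm m' hm' h
    simp only [Prod.mk.injEq] at h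
    have hyy : y m = y m' := by
      rw [← Nat.div_add_mod (y m) d, ← Nat.div_add_mod (y m') d, h.1, h.2]
    obtain ⟨a1, a2, a3⟩ := hmem m hm
    obtain ⟨b1, b2, b3⟩ := hmem m' hm'
    have a4 := a3 Mx hMI
    have b4 := b3 Mx hMI
    ext
    simp only [hy] at hyy
    split_ifs at hyy <;> omega

lemma num_bound {n : ℕ} {p θ : ℝ} (hn : 1 ≤ n) (hd : 1 ≤ d) (hlt : ℓ ≤ t * d)
    (hlt2 : (t - 1) * d < ℓ) (ht : 1 ≤ t) (hN : N = 3 * (t * d) - ℓ) (hp : 0 ≤ p)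
    (hθ0 : 0 ≤ θ) (hθ1 : θ ≤ 1)
    (hp1 : p ^ t * (n : ℝ) ^ (t * d + ℓ - 1) = θ ^ t) (hp2 : (n : ℝ) ^ d * p ≤ θ)
    (I : Finset (Fin t)) (hI : I ≠ Finset.univ) :
    (n : ℝ) ^ (N - (RS ℓ d t N ∪ I.biUnion (winS ℓ d t N)).card) * p ^ (t - I.card) ≤ θ := by
  have hnr : (1 : ℝ) ≤ n := by exact_mod_cast hn
  rcases I.eq_empty_or_nonempty with h0 | h0
  · subst h0
    simp only [Finset.biUnion_empty, Finset.union_empty, Finset.card_empty, Nat.sub_zero]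
    rw [card_RS hd hlt hlt2 ht hN, mul_comm, hp1]
    exact pow_le_of_le_one hθ0 hθ1 (by omega)
  · have hb : t - I.card ≠ 0 := by
      have := (Finset.card_lt_iff_ne_univ I).2 hI
      rw [Fintype.card_fin] at this
      omega
    calc _ ≤ (n : ℝ) ^ ((t - I.card) * d) * p ^ (t - I.card) := by
          gcongr
          exact card_compl_win hd hlt hN I h0
      _ = ((n : ℝ) ^ d * p) ^ (t - I.card) := by rw [mul_pow, ← pow_mul, mul_comm d]
      _ ≤ θ ^ (t - I.card) := by gcongr
      _ ≤ θ := pow_le_of_le_one hθ0 hθ1 hb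

end winsec

lemma edgeSet_middle {n ℓ d t N : ℕ} (hd : 1 ≤ d) (hlt : ℓ ≤ t * d) (hN : N = 3 * (t * d) - ℓ)
    (A B : Fin ℓ → Fin n) (c : Fin N → Fin n) (x : Fin t) :
    edgeSet (ℓ + d) d (t + x) (concat3 A c B) = (winS ℓ d t N x).image c := by
  have h := fin_mul_le (d := d) x
  have e : (t + x) * d = t * d + x * d := by ring
  ext v
  simp only [edgeSet, edgeIdx, winS, Finset.mem_image, Finset.mem_filter, Finset.mem_univ,
    true_and, Finset.mem_range]
  constructor
  · rintro ⟨m, ⟨j, hj, hm⟩, rfl⟩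
    refine ⟨⟨(m : ℕ) - ℓ, by omega⟩, by simp only; omega, ?_⟩
    rw [concat3, dif_neg (by omega), dif_pos (by omega)]
  · rintro ⟨m, hm, rfl⟩
    refine ⟨⟨(m : ℕ) + ℓ, by omega⟩, ⟨(m : ℕ) + ℓ - (t + x) * d, by omega, by simp only; omega⟩, ?_⟩
    rw [concat3, dif_neg (by simp only; omega), dif_pos (by simp only; omega)]
    congr 1
    ext
    simp

lemma spans_of {n ℓ d t N : ℕ} (hd : 1 ≤ d) (hlt : ℓ ≤ t * d) (hN : N = 3 * (t * d) - ℓ)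
    {H E : Finset (Finset (Fin n))}
    (A B : Fin ℓ → Fin n) (c : Fin N → Fin n) (hc : c ∈ Fset H d t N A B)
    (hE : ∀ x, (winS ℓ d t N x).image c ∈ E) :
    SpansPath (ℓ + d) ℓ (3 * t) (H ∪ E) (concat3 A c B) := by
  obtain ⟨-, h1, h2, h3⟩ := Finset.mem_filter.1 hc
  refine ⟨h1, fun i hi => ?_⟩
  rw [Nat.add_sub_cancel_left]
  change edgeSet (ℓ + d) d i (concat3 A c B) ∈ _
  rw [Finset.mem_union]
  by_cases ha : i < t
  · exact Or.inl (h2 i ha)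
  by_cases hb : i < 2 * t
  · right
    have := edgeSet_middle hd hlt hN A B c ⟨i - t, by omega⟩
    simp only [show t + (i - t) = i by omega] at this
    rw [this]
    exact hE _
  · left
    have := h3 (i - 2 * t) (by omega)
    rwa [show 2 * t + (i - 2 * t) = i by omega] at this


/-- The required event. -/
def ConnEvent {n : ℕ} (k ℓ d t N m T : ℕ) (η : ℝ) (H : Finset (Finset (Fin n)))
    (W : Finset (Fin n)) (E : Finset (Finset (Fin n))) : Prop :=
  ∃ 𝒞 : Finset (Fin N → Fin n),
    (∀ c ∈ 𝒞, Function.Injective c) ∧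
    (∀ c ∈ 𝒞, ∀ c' ∈ 𝒞, c ≠ c' → ∀ m m', c m ≠ c' m') ∧
    (∀ c ∈ 𝒞, ∀ m, c m ∉ W) ∧
    𝒞.card ≤ m ∧
    ∀ A B : Fin ℓ → Fin n, Function.Injective A → Function.Injective B →
      (∀ m m', A m ≠ B m') →
      η * (n : ℝ) ^ d ≤ (degOf H (Finset.image A Finset.univ) : ℝ) →
      η * (n : ℝ) ^ d ≤ (degOf H (Finset.image B Finset.univ) : ℝ) →
      T ≤ (𝒞.filter (fun c => SpansPath k ℓ (3 * t) (H ∪ E) (concat3 A c B))).card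

lemma spansPath_mono {n k ℓ a b : ℕ} {E E' : Finset (Finset (Fin n))} (h : E ⊆ E')
    {w : Fin b → Fin n} (hw : SpansPath k ℓ a E w) : SpansPath k ℓ a E' w :=
  ⟨hw.1, fun i hi => h (hw.2 i hi)⟩

lemma connEvent_mono {n k ℓ d t N m T : ℕ} {η : ℝ} {H : Finset (Finset (Fin n))}
    {W : Finset (Fin n)} {E E' : Finset (Finset (Fin n))} (h : E ⊆ E')
    (hE : ConnEvent k ℓ d t N m T η H W E) : ConnEvent k ℓ d t N m T η H W E' := by
  obtain ⟨D, h1, h2, h3, h4, h5⟩ := hE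
  refine ⟨D, h1, h2, h3, h4, fun A B a1 a2 a3 a4 a5 => (h5 A B a1 a2 a3 a4 a5).trans ?_⟩
  apply Finset.card_le_card
  intro c hc
  obtain ⟨c1, c2⟩ := Finset.mem_filter.1 hc
  exact Finset.mem_filter.2 ⟨c1, spansPath_mono (Finset.union_subset_union_right h) c2⟩

lemma concat3_inj_mid {n p q r : ℕ} {A : Fin p → Fin n} {C : Fin q → Fin n} {B : Fin r → Fin n}
    (h : Function.Injective (concat3 A C B)) : Function.Injective C := by
  have key : ∀ x : Fin q, concat3 A C B ⟨p + x, by omega⟩ = C x := by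
    intro x
    rw [concat3, dif_neg (by simp only; omega), dif_pos (by simp only; omega)]
    congr 1
    ext
    simp
  intro x y hxy
  rw [← key x, ← key y] at hxy
  have := h hxy
  rw [Fin.mk.injEq] at this
  ext
  omega

theorem core {n ℓ d t N m T : ℕ} {η p q θ κ : ℝ} (hn : 1 ≤ n) (hl1 : 1 ≤ ℓ) (hd : 1 ≤ d)
    (hlt : ℓ ≤ t * d) (hlt2 : (t - 1) * d < ℓ) (ht : 1 ≤ t) (hN : N = 3 * (t * d) - ℓ)
    {H : Finset (Finset (Fin n))} (hH : H ⊆ kSets n (ℓ + d)) (hη : 0 < η) (hη1 : η ≤ 1)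
    (hdich : ∀ S : Finset (Fin n), S.card = ℓ →
        degOf H S = 0 ∨ η * (n : ℝ) ^ d ≤ (degOf H S : ℝ))
    (W : Finset (Fin n))
    (hW : ((W.card + N * m : ℕ) : ℝ) + (2 * ℓ + N + t * (ℓ + d) : ℝ) ≤ 2 / 3 * η * n)
    (hp0 : 0 ≤ p) (hpq : p ≤ q) (hq1 : q ≤ 1)
    (hθ0 : 0 ≤ θ) (hθ1 : θ ≤ 1) (hθ : (2 : ℝ) ^ t * θ ≤ 1 / 2)
    (hp1 : p ^ t * (n : ℝ) ^ (t * d + ℓ - 1) = θ ^ t) (hp2 : (n : ℝ) ^ d * p ≤ θ)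
    (hκ : κ = θ ^ t * ((η / 3) ^ (2 * t) * (1 / 3) ^ (t * d - ℓ)) / (4 * (N : ℝ) ^ N))
    (hκ1 : κ ≤ 1) :
    1 - 2 ^ T * ((1 - κ) ^ m * (n : ℝ) ^ (2 * ℓ)) ≤
      gProb n (ℓ + d) q (ConnEvent (ℓ + d) ℓ d t N m T η H W) := by
  have hp1' : p ≤ 1 := hpq.trans hq1
  have hNpos : 0 < N := by omega
  have htd : (t - 1) * d + d = t * d := by
    rw [← Nat.succ_mul]; congr 1; omega
  set P : (Fin ℓ → Fin n) × (Fin ℓ → Fin n) → Prop := fun AB =>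
    Function.Injective AB.1 ∧ Function.Injective AB.2 ∧ (∀ m m', AB.1 m ≠ AB.2 m') ∧
      η * (n : ℝ) ^ d ≤ (degOf H (Finset.image AB.1 Finset.univ) : ℝ) ∧
      η * (n : ℝ) ^ d ≤ (degOf H (Finset.image AB.2 Finset.univ) : ℝ) with hP
  set F : {AB // P AB} → Finset (Fin N → Fin n) := fun i => Fset H d t N i.1.1 i.1.2 with hF
  set win := winS ℓ d t N with hwin
  have hq0 : t * d + (t - 1) * d - ℓ < N := by omega
  have hproc := main_process (win := win) (F := F) (k := ℓ + d) (p := p) (θ := θ) (τ := θ ^ t)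
    (c0 := (η / 3) ^ (2 * t) * (1 / 3) ^ (t * d - ℓ)) (κ := κ) hn hNpos hp0 hp1'
    (winS_inj hd hlt hN) (card_winS hlt hN) (RS ℓ d t N) ⟨_, hq0⟩
    (Finset.mem_filter.2 ⟨Finset.mem_univ _, Or.inr (Or.inr rfl)⟩)
    (win_anchor hd hlt hlt2 hN _ rfl) (win_cover hd hlt hN) hθ0
    (num_bound hn hd hlt hlt2 ht hN hp0 hθ0 hθ1 hp1 hp2) hθ
    (by rw [card_RS hd hlt hlt2 ht hN]; exact hp1) hκ hκ1 (W.card + N * m)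
    (by
      intro i c hc
      exact concat3_inj_mid (Finset.mem_filter.1 hc).2.1)
    (by
      rintro ⟨⟨A, B⟩, h1, h2, h3, h4, h5⟩ Z hZ
      apply card_Fset hd hlt (by rw [hN, mul_assoc]) hH hη hη1 hdich A B h1 h2 h3 h4 h5
      have : (Z.card : ℝ) ≤ ((W.card + N * m : ℕ) : ℝ) := by exact_mod_cast hZ
      linarith)
    m W (fun _ => 1) (fun _ => zero_le_one) le_rfl
  have hcard : (∑ _i : {AB // P AB}, (1 : ℝ)) ≤ (n : ℝ) ^ (2 * ℓ) := by
    rw [Finset.sum_const, Finset.card_univ, nsmul_eq_mul, mul_one]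
    have h1 : Fintype.card {AB // P AB} ≤ n ^ (2 * ℓ) := by
      refine (Fintype.card_subtype_le _).trans (le_of_eq ?_)
      simp [Fintype.card_prod, two_mul, pow_add]
    exact_mod_cast h1
  have hYY0 : ∀ E, 0 ≤ YY win F m W (fun _ => 1) E := by
    intro E
    obtain ⟨D, -, h⟩ := YY_exists (win := win) (F := F) m W (fun _ => 1) E
    rw [h, pot]
    positivity
  have hκ0 : 0 ≤ (1 - κ) ^ m := pow_nonneg (by linarith) m
  have hEE : EE p (kSets n (ℓ + d)) (YY win F m W (fun _ => 1)) ≤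
      (1 - κ) ^ m * (n : ℝ) ^ (2 * ℓ) := by
    refine (EE_anti_pool hp0 hp1' (Finset.filter_subset _ _) (fun E E' h => YY_anti E E' h)).trans
      (hproc.trans ?_)
    gcongr
  have hind : ∀ E, 1 - 2 ^ T * YY win F m W (fun _ => 1) E ≤
      if ConnEvent (ℓ + d) ℓ d t N m T η H W E then (1 : ℝ) else 0 := by
    intro E
    split_ifs with hE
    · have : 0 ≤ (2 : ℝ) ^ T * YY win F m W (fun _ => 1) E := mul_nonneg (by positivity) (hYY0 E)
      linarith
    · by_contra hlt'
      apply hE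
      push Not at hlt'
      obtain ⟨D, ⟨g1, g2, g3, g4, g5⟩, h⟩ := YY_exists (win := win) (F := F) m W (fun _ => 1) E
      rw [h] at hlt'
      refine ⟨D, g2, g3, g4, g1, fun A B a1 a2 a3 a4 a5 => ?_⟩
      have hle : (1 / 2 : ℝ) ^ (D.filter (fun c => c ∈ Fset H d t N A B)).card ≤
          pot F (fun _ => 1) D := by
        have := Finset.single_le_sum (s := Finset.univ) (f := fun i : {AB // P AB} =>
          (1 : ℝ) * (1 / 2 : ℝ) ^ (D.filter (fun c => c ∈ F i)).card)
          (fun i _ => by positivity) (Finset.mem_univ ⟨(A, B), a1, a2, a3, a4, a5⟩)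
        simpa [pot, hF] using this
      have hT : T ≤ (D.filter (fun c => c ∈ Fset H d t N A B)).card := by
        by_contra hc
        push Not at hc
        have h1 : (1 / 2 : ℝ) ^ T ≤ (1 / 2 : ℝ) ^ (D.filter (fun c => c ∈ Fset H d t N A B)).card :=
          pow_le_pow_of_le_one (by norm_num) (by norm_num) hc.le
        have h2 : (2 : ℝ) ^ T * (1 / 2) ^ T = 1 := by rw [← mul_pow]; norm_num
        have h3 : (2 : ℝ) ^ T * (1 / 2) ^ T ≤ 2 ^ T * pot F (fun _ => 1) D := by
          gcongr
          exact h1.trans hle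
        linarith
      refine hT.trans (Finset.card_le_card ?_)
      intro c hc
      obtain ⟨c1, c2⟩ := Finset.mem_filter.1 hc
      exact Finset.mem_filter.2 ⟨c1, spans_of hd hlt hN A B c c2 (g5 c c1)⟩
  rw [gProb_eq_EE]
  calc 1 - 2 ^ T * ((1 - κ) ^ m * (n : ℝ) ^ (2 * ℓ))
      ≤ 1 - 2 ^ T * EE p (kSets n (ℓ + d)) (YY win F m W (fun _ => 1)) := by gcongr
    _ = EE p (kSets n (ℓ + d)) (fun E => 1 - 2 ^ T * YY win F m W (fun _ => 1) E) := by
        rw [EE_sub, EE_const, EE_smul]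
    _ ≤ EE p (kSets n (ℓ + d)) (fun E =>
          if ConnEvent (ℓ + d) ℓ d t N m T η H W E then (1 : ℝ) else 0) :=
        EE_mono hp0 hp1' (fun E _ => hind E)
    _ ≤ _ := by
        apply EE_mono_p hp0 hpq hq1
        intro E E' h
        split_ifs with h1 h2
        · exact le_rfl
        · exact absurd (connEvent_mono h h1) h2
        · exact zero_le_one
        · exact le_rfl


lemma exists_p {n ℓ d t : ℕ} {θ : ℝ} (hn : 1 ≤ n) (hl1 : 1 ≤ ℓ) (ht : 1 ≤ t)
    (hθ0 : 0 ≤ θ) :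
    ∃ p : ℝ, 0 ≤ p ∧ p ^ t * (n : ℝ) ^ (t * d + ℓ - 1) = θ ^ t ∧ (n : ℝ) ^ d * p ≤ θ := by
  have hnr : (1 : ℝ) ≤ n := by exact_mod_cast hn
  have hn0 : (0 : ℝ) < n := by linarith
  set r : ℝ := ((n : ℝ) ^ (t * d + ℓ - 1)) ^ ((t : ℝ)⁻¹) with hr
  have hr0 : 0 < r := by positivity
  have hrt : r ^ t = (n : ℝ) ^ (t * d + ℓ - 1) :=
    Real.rpow_inv_natCast_pow (by positivity) (by omega)
  refine ⟨θ / r, by positivity, ?_, ?_⟩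
  · rw [div_pow, hrt]
    field_simp
  · have h1 : (n : ℝ) ^ d ≤ r := by
      refine le_of_pow_le_pow_left₀ (n := t) (by omega) hr0.le ?_
      rw [hrt, ← pow_mul]
      exact pow_le_pow_right₀ hnr (by rw [mul_comm d]; omega)
    rw [mul_div_assoc', div_le_iff₀ hr0, mul_comm]
    gcongr

lemma p_le {n ℓ d t C : ℕ} {θ p q ε : ℝ} (hn : 1 ≤ n) (hl1 : 1 ≤ ℓ) (ht : 1 ≤ t)
    (hlt2 : (t - 1) * d < ℓ) (hd : 1 ≤ d) (hC : 1 ≤ C)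
    (hθ0 : 0 ≤ θ) (hθ1 : θ ≤ 1) (hp0 : 0 ≤ p) (hq0 : 0 ≤ q)
    (hε : ε ≤ (ℓ : ℝ) / (3 * (t : ℝ)))
    (hp1 : p ^ t * (n : ℝ) ^ (t * d + ℓ - 1) = θ ^ t) 
    (hq2 : 2 ≤ ℓ → (n : ℝ) ^ (-(((ℓ + d : ℕ) : ℝ) - (ℓ : ℝ)) - ε) ≤ q)
    (hq1 : ℓ = 1 → (C : ℝ) * (n : ℝ) ^ (-(((ℓ + d : ℕ) : ℝ) - 1)) ≤ q) : p ≤ q := by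
  have hnr : (1 : ℝ) ≤ n := by exact_mod_cast hn
  have hn0 : (0 : ℝ) < n := by linarith
  have htr : (1 : ℝ) ≤ t := by exact_mod_cast ht
  have hθt : θ ^ t ≤ 1 := pow_le_one₀ hθ0 hθ1
  have key : (1 : ℝ) ≤ q ^ t * (n : ℝ) ^ (t * d + ℓ - 1) := by
    rcases Nat.lt_or_ge 1 ℓ with h | h
    · have h2 := hq2 h
      have e0 : (((ℓ + d : ℕ) : ℝ) - (ℓ : ℝ)) = d := by push_cast; ring
      rw [e0] at h2
      have h3 : ((n : ℝ) ^ (-(d : ℝ) - ε)) ^ t ≤ q ^ t := by gcongr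
      rw [← Real.rpow_mul_natCast hn0.le] at h3
      refine le_trans ?_ (mul_le_mul_of_nonneg_right h3 (by positivity))
      rw [← Real.rpow_natCast (n : ℝ) (t * d + ℓ - 1), ← Real.rpow_add hn0]
      apply Real.one_le_rpow hnr
      have e1 : ((t * d + ℓ - 1 : ℕ) : ℝ) = t * d + ℓ - 1 := by
        rw [Nat.cast_sub (by omega)]; push_cast; ring
      rw [e1]
      have h4 : ε * t ≤ ℓ / 3 := by
        rw [le_div_iff₀ (by positivity)] at hε
        linarith
      have h5 : (2 : ℝ) ≤ ℓ := by exact_mod_cast h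
      nlinarith
    · have hl : ℓ = 1 := by omega
      subst hl
      have ht' : t = 1 := by
        by_contra hne
        have : 1 ≤ (t - 1) * d := Nat.mul_pos (by omega) hd
        omega
      subst ht'
      have h2 := hq1 rfl
      have e0 : (((1 + d : ℕ) : ℝ) - 1) = d := by push_cast; ring
      rw [e0, Real.rpow_neg hn0.le, Real.rpow_natCast] at h2
      have hCr : (1 : ℝ) ≤ C := by exact_mod_cast hC
      have e1 : 1 * d + 1 - 1 = d := by omega
      rw [e1, pow_one]
      have h3 : (0 : ℝ) < (n : ℝ) ^ d := by positivity
      calc (1 : ℝ) ≤ C := hCr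
        _ = C * ((n : ℝ) ^ d)⁻¹ * (n : ℝ) ^ d := by field_simp
        _ ≤ _ := by gcongr
  refine le_of_pow_le_pow_left₀ (n := t) (by omega) hq0 ?_
  have h3 : (0 : ℝ) < (n : ℝ) ^ (t * d + ℓ - 1) := by positivity
  refine le_of_mul_le_mul_right ?_ h3
  linarith

lemma asym {κ β δ : ℝ} (s : ℕ) (hκ0 : 0 < κ) (hκ1 : κ ≤ 1) (hβ : 0 < β) (hβ1 : β ≤ 1)
    (hβ2 : β ≤ κ / 6) (hδ : 0 < δ) : ∃ n₀ : ℕ, ∀ n : ℕ, n₀ ≤ n →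
      (2 : ℝ) ^ ⌈3 * β ^ 3 * (n : ℝ)⌉₊ * ((1 - κ) ^ ⌊β * (n : ℝ)⌋₊ * (n : ℝ) ^ s) ≤ δ := by
  have h1 := (tendsto_rpow_mul_exp_neg_mul_atTop_nhds_zero (s : ℝ) (κ * β / 2)
    (by positivity)).comp (tendsto_natCast_atTop_atTop (R := ℝ))
  have h2 := h1.eventually (gt_mem_nhds (show (0 : ℝ) < δ * Real.exp (-2) by positivity))
  obtain ⟨n₀, hn₀⟩ := Filter.eventually_atTop.1 h2
  refine ⟨n₀, fun n hn => ?_⟩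
  have h3 := hn₀ n hn
  simp only [Function.comp, Real.rpow_natCast] at h3
  have hn0 : (0 : ℝ) ≤ n := by positivity
  have hT : (⌈3 * β ^ 3 * (n : ℝ)⌉₊ : ℝ) ≤ 3 * β ^ 3 * n + 1 :=
    (Nat.ceil_lt_add_one (by positivity)).le
  have hm : β * n - 1 ≤ (⌊β * (n : ℝ)⌋₊ : ℝ) := (Nat.sub_one_lt_floor _).le
  have e2 : (2 : ℝ) ≤ Real.exp 1 := by
    have := Real.add_one_le_exp (1 : ℝ)
    linarith
  have a1 : (2 : ℝ) ^ ⌈3 * β ^ 3 * (n : ℝ)⌉₊ ≤ Real.exp (3 * β ^ 3 * n + 1) := by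
    calc (2 : ℝ) ^ ⌈3 * β ^ 3 * (n : ℝ)⌉₊ ≤ Real.exp 1 ^ ⌈3 * β ^ 3 * (n : ℝ)⌉₊ := by gcongr
      _ = Real.exp ⌈3 * β ^ 3 * (n : ℝ)⌉₊ := by rw [← Real.exp_nat_mul, mul_one]
      _ ≤ _ := Real.exp_le_exp.2 hT
  have a2 : (1 - κ) ^ ⌊β * (n : ℝ)⌋₊ ≤ Real.exp (-(κ * β * n) + 1) := by
    calc (1 - κ) ^ ⌊β * (n : ℝ)⌋₊ ≤ Real.exp (-κ) ^ ⌊β * (n : ℝ)⌋₊ := by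
          have := Real.add_one_le_exp (-κ)
          gcongr
          linarith
      _ = Real.exp (⌊β * (n : ℝ)⌋₊ * -κ) := by rw [← Real.exp_nat_mul]
      _ ≤ _ := by
        apply Real.exp_le_exp.2
        nlinarith
  have hκp : 0 ≤ (1 - κ) ^ ⌊β * (n : ℝ)⌋₊ := pow_nonneg (by linarith) _
  have hb : 3 * β ^ 3 * n ≤ κ * β / 2 * n := by
    have : 3 * β ^ 3 ≤ κ * β / 2 := by
      have : β ^ 2 ≤ κ / 6 := by nlinarith
      nlinarith
    gcongr
  calc _ ≤ Real.exp (3 * β ^ 3 * n + 1) * (Real.exp (-(κ * β * n) + 1) * (n : ℝ) ^ s) := by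
        gcongr
    _ = Real.exp (3 * β ^ 3 * n + 1 + (-(κ * β * n) + 1)) * (n : ℝ) ^ s := by
        rw [← mul_assoc, ← Real.exp_add]
    _ ≤ Real.exp (2 + -(κ * β / 2) * n) * (n : ℝ) ^ s := by
        gcongr ?_ * _
        apply Real.exp_le_exp.2
        nlinarith
    _ = Real.exp 2 * ((n : ℝ) ^ s * Real.exp (-(κ * β / 2) * n)) := by
        rw [Real.exp_add]; ring
    _ ≤ Real.exp 2 * (δ * Real.exp (-2)) := by gcongr
    _ = δ := by
        rw [mul_left_comm, ← Real.exp_add]; simp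


/-- Lemma 3.3, the connecting lemma. -/
theorem connecting_lemma
    (k ℓ : ℕ) (hl1 : 1 ≤ ℓ) (hlk : ℓ < k)
    (t1 t3 : ℕ) (ht1 : t1 = ⌈(ℓ : ℚ) / ((k : ℚ) - (ℓ : ℚ))⌉₊)
    (ht3 : t3 = 3 * t1 * (k - ℓ) - ℓ) :
    ∃ η₀ : ℝ, 0 < η₀ ∧ ∀ η : ℝ, 0 < η → η ≤ η₀ →
    ∃ β₀ : ℝ, 0 < β₀ ∧ ∀ β : ℝ, 0 < β → β ≤ β₀ →
    ∃ C₀ : ℕ, ∀ C : ℕ, C₀ ≤ C →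
    ∀ ε : ℝ, 0 < ε → ε ≤ (ℓ : ℝ) / (3 * (t1 : ℝ)) →
    ∀ δ : ℝ, 0 < δ → ∃ n₀ : ℕ, ∀ n : ℕ, n₀ ≤ n →
    ∀ H' : Finset (Finset (Fin n)), H' ⊆ kSets n k →
      (∀ S : Finset (Fin n), S.card = ℓ →
        degOf H' S = 0 ∨ η * (n : ℝ) ^ (k - ℓ) ≤ (degOf H' S : ℝ)) →
    ∀ p : ℝ, 0 ≤ p → p ≤ 1 →
      ((2 ≤ ℓ → (n : ℝ) ^ (-((k : ℝ) - (ℓ : ℝ)) - ε) ≤ p) ∧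
       (ℓ = 1 → (C : ℝ) * (n : ℝ) ^ (-((k : ℝ) - 1)) ≤ p)) →
    ∀ W : Finset (Fin n), (W.card : ℝ) ≤ η * (n : ℝ) / 3 →
      1 - δ ≤ gProb n k p (fun E =>
        ∃ 𝒞 : Finset (Fin t3 → Fin n),
          (∀ c ∈ 𝒞, Function.Injective c) ∧
          (∀ c ∈ 𝒞, ∀ c' ∈ 𝒞, c ≠ c' → ∀ m m', c m ≠ c' m') ∧
          (∀ c ∈ 𝒞, ∀ m, c m ∉ W) ∧
          (𝒞.card : ℝ) ≤ β * (n : ℝ) ∧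
          ∀ A B : Fin ℓ → Fin n, Function.Injective A → Function.Injective B →
            (∀ m m', A m ≠ B m') →
            η * (n : ℝ) ^ (k - ℓ) ≤ (degOf H' (Finset.image A Finset.univ) : ℝ) →
            η * (n : ℝ) ^ (k - ℓ) ≤ (degOf H' (Finset.image B Finset.univ) : ℝ) →
            3 * β ^ 3 * (n : ℝ) ≤
              ((𝒞.filter (fun c =>
                SpansPath k ℓ (3 * t1) (H' ∪ E) (concat3 A c B))).card : ℝ)) := by
  obtain ⟨d, rfl⟩ : ∃ d, k = ℓ + d := ⟨k - ℓ, by omega⟩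
  have hd : 1 ≤ d := by omega
  have hd0 : (0 : ℚ) < d := by exact_mod_cast hd
  have hl0 : (0 : ℚ) < ℓ := by exact_mod_cast hl1
  have e0 : (((ℓ + d : ℕ) : ℚ) - (ℓ : ℚ)) = d := by push_cast; ring
  rw [e0] at ht1
  have htpos : 1 ≤ t1 := by
    rw [ht1]; exact Nat.ceil_pos.2 (by positivity)
  have hlt : ℓ ≤ t1 * d := by
    have := Nat.le_ceil ((ℓ : ℚ) / d)
    rw [← ht1, div_le_iff₀ hd0] at this
    exact_mod_cast this
  have hlt2 : (t1 - 1) * d < ℓ := by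
    have := Nat.ceil_lt_add_one (show 0 ≤ (ℓ : ℚ) / d by positivity)
    rw [← ht1] at this
    have h2 : (t1 : ℚ) - 1 < ℓ / d := by linarith
    rw [lt_div_iff₀ hd0] at h2
    have h3 : (((t1 - 1) * d : ℕ) : ℚ) < ℓ := by
      rw [Nat.cast_mul, Nat.cast_sub htpos]
      simpa using h2
    exact_mod_cast h3
  simp only [Nat.add_sub_cancel_left] at ht3 ⊢
  have hN : t3 = 3 * (t1 * d) - ℓ := by rw [ht3, mul_assoc]
  have hNpos : 0 < t3 := by omega
  have hNr : (1 : ℝ) ≤ t3 := by exact_mod_cast hNpos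
  refine ⟨1, one_pos, fun η hη hη1 => ?_⟩
  set θ : ℝ := (1 / 2) ^ (t1 + 1) with hθdef
  have hθ0 : 0 < θ := by positivity
  have hθ1 : θ ≤ 1 := pow_le_one₀ (by norm_num) (by norm_num)
  have hθ2 : (2 : ℝ) ^ t1 * θ ≤ 1 / 2 := by
    rw [hθdef, pow_succ, ← mul_assoc, ← mul_pow]; norm_num
  set κ : ℝ := θ ^ t1 * ((η / 3) ^ (2 * t1) * (1 / 3) ^ (t1 * d - ℓ)) / (4 * (t3 : ℝ) ^ t3) with hκ
  have hκ0 : 0 < κ := by positivity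
  have hκ1 : κ ≤ 1 := by
    have b1 : θ ^ t1 ≤ 1 := pow_le_one₀ hθ0.le hθ1
    have b2 : (η / 3) ^ (2 * t1) ≤ 1 := pow_le_one₀ (by positivity) (by linarith)
    have b3 : (1 / 3 : ℝ) ^ (t1 * d - ℓ) ≤ 1 := pow_le_one₀ (by norm_num) (by norm_num)
    have b4 : (1 : ℝ) ≤ (t3 : ℝ) ^ t3 := one_le_pow₀ hNr
    rw [hκ, div_le_one (by positivity)]
    have b5 : (η / 3) ^ (2 * t1) * (1 / 3) ^ (t1 * d - ℓ) ≤ 1 := mul_le_one₀ b2 (by positivity) b3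
    have b6 : θ ^ t1 * ((η / 3) ^ (2 * t1) * (1 / 3) ^ (t1 * d - ℓ)) ≤ 1 :=
      mul_le_one₀ b1 (by positivity) b5
    linarith
  refine ⟨min 1 (min (κ / 6) (η / (6 * t3))), by positivity, fun β hβ hβ0 => ?_⟩
  have hβ1 : β ≤ 1 := hβ0.trans (min_le_left _ _)
  have hβ2 : β ≤ κ / 6 := hβ0.trans ((min_le_right _ _).trans (min_le_left _ _))
  have hβ3 : β ≤ η / (6 * t3) := hβ0.trans ((min_le_right _ _).trans (min_le_right _ _))
  refine ⟨1, fun C hC ε hε0 hε δ hδ => ?_⟩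
  obtain ⟨n₁, hn₁⟩ := asym (2 * ℓ) hκ0 hκ1 hβ hβ1 hβ2 hδ
  obtain ⟨n₂, hn₂⟩ := exists_nat_ge ((2 * ℓ + t3 + t1 * (ℓ + d) : ℝ) / (η / 6))
  refine ⟨max 1 (max n₁ n₂), fun n hn H hH hdich q hq0 hq1 hq W hW => ?_⟩
  have hnpos : 1 ≤ n := (le_max_left _ _).trans hn
  have hA := hn₁ n ((le_max_left _ _).trans ((le_max_right _ _).trans hn))
  have hnn2 : (n₂ : ℝ) ≤ n := by
    exact_mod_cast (le_max_right _ _).trans ((le_max_right _ _).trans hn)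
  have hconst : (2 * ℓ + t3 + t1 * (ℓ + d) : ℝ) ≤ η / 6 * n := by
    have := hn₂.trans hnn2
    rw [div_le_iff₀ (by positivity)] at this
    linarith
  have hn0 : (0 : ℝ) ≤ n := by positivity
  have hfl : (⌊β * (n : ℝ)⌋₊ : ℝ) ≤ β * n := Nat.floor_le (by positivity)
  have hNm : (t3 : ℝ) * (⌊β * (n : ℝ)⌋₊ : ℝ) ≤ η / 6 * n := by
    rw [le_div_iff₀ (by positivity)] at hβ3
    have : (t3 : ℝ) * (⌊β * (n : ℝ)⌋₊ : ℝ) ≤ t3 * (β * n) := by gcongr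
    have h2 : (β * (6 * t3)) * n ≤ η * n := by gcongr
    nlinarith
  obtain ⟨p, hp0, hp1, hp2⟩ := exists_p (d := d) hnpos hl1 htpos hθ0.le
  have hpq : p ≤ q := p_le hnpos hl1 htpos hlt2 hd hC hθ0.le hθ1 hp0 hq0 hε hp1 hq.1 hq.2
  have hmain := core (m := ⌊β * (n : ℝ)⌋₊) (T := ⌈3 * β ^ 3 * (n : ℝ)⌉₊) hnpos hl1 hd hlt hlt2
    htpos hN hH hη hη1 hdich W (by push_cast; linarith) hp0 hpq hq1 hθ0.le hθ1 hθ2 hp1 hp2 hκ hκ1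
  have hfin : 1 - δ ≤ gProb n (ℓ + d) q
      (ConnEvent (ℓ + d) ℓ d t1 t3 ⌊β * (n : ℝ)⌋₊ ⌈3 * β ^ 3 * (n : ℝ)⌉₊ η H W) := by linarith
  refine hfin.trans ?_
  rw [gProb_eq_EE, gProb_eq_EE]
  apply EE_mono hq0 hq1
  intro E _
  split_ifs with h1 h2
  · exact le_rfl
  · exfalso
    apply h2
    obtain ⟨D, d1, d2, d3, d4, d5⟩ := h1
    refine ⟨D, d1, d2, d3, ?_, fun A B a1 a2 a3 a4 a5 => ?_⟩
    · have : (D.card : ℝ) ≤ (⌊β * (n : ℝ)⌋₊ : ℝ) := by exact_mod_cast d4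
      linarith
    · have h3 := d5 A B a1 a2 a3 a4 a5
      exact (Nat.le_ceil _).trans (by exact_mod_cast h3)
  · exact zero_le_one
  · exact le_rfl
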